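/- arXiv:2503.00864 — 3 statements merged into one kernel-verified Lean document; each statement's English description precedes it below -/
import Mathlib

section
/- Let X be a complete metric space and x ∈ X. The partially ordered (by inclusion) family 𝓕⁰_x of factor subsets of X through x that are isometric to real Hilbert spaces has a maximal element. -/
/-- `IsL2Prod Φ` means `Φ : X → Y × Z` is a bijection identifying `X` with the
ℓ²-direct product of the metric spaces `Y` and `Z`. -/
def IsL2Prod {X Y Z : Type} [MetricSpace X] [MetricSpace Y] [MetricSpace Z]
    (Φ : X → Y × Z) : Prop :=
  Function.Bijective Φ ∧
    ∀ p q : X, dist p q ^ 2 = dist (Φ p).1 (Φ q).1 ^ 2 + dist (Φ p).2 (Φ q).2 ^ 2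

/-- `A` is a factor subset of `X` through `x`: some ℓ²-product decomposition of `X`
carries `A` onto the fiber of the first factor through `x`. -/
def IsFactorSubset {X : Type} [MetricSpace X] (A : Set X) (x : X) : Prop :=
  x ∈ A ∧ ∃ (Y Z : Type) (_ : MetricSpace Y) (_ : MetricSpace Z) (Φ : X → Y × Z),
    IsL2Prod Φ ∧ A = {p : X | (Φ p).2 = (Φ x).2}

/-- A line in a metric space: a subset isometric to `ℝ`. -/
def IsLine {X : Type} [MetricSpace X] (ℓ : Set X) : Prop :=
  ∃ γ : ℝ → X, Isometry γ ∧ Set.range γ = ℓ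

/-- A splitting line: a line carried onto a fiber `ℝ × {z₀}` by some
ℓ²-product decomposition `X ≅ ℝ × Z`. -/
def IsSplittingLine {X : Type} [MetricSpace X] (ℓ : Set X) : Prop :=
  IsLine ℓ ∧ ∃ (Z : Type) (_ : MetricSpace Z) (Φ : X → ℝ × Z) (z₀ : Z),
    IsL2Prod Φ ∧ Φ '' ℓ = Set.univ ×ˢ {z₀}

/-- `π` is the nearest-point projection onto `A`: every point has `π p` as its
unique nearest point in `A`. -/
def IsNearestPointProj {X : Type} [MetricSpace X] (A : Set X) (π : X → X) : Prop :=
  ∀ p : X, π p ∈ A ∧ (∀ a ∈ A, dist p (π p) ≤ dist p a) ∧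
    ∀ a ∈ A, dist p a = dist p (π p) → a = π p

/-- The subset `A`, with the induced metric, is isometric to a real Hilbert space. -/
def IsHilbertSubset {X : Type} [MetricSpace X] (A : Set X) : Prop :=
  ∃ (H : Type) (_ : NormedAddCommGroup H) (_ : InnerProductSpace ℝ H) (_ : CompleteSpace H)
    (f : A → H), Isometry f ∧ Function.Surjective f

/-!
A chain of Hilbert factors has the closure of its union as an upper bound, so Zorn's lemma applies.

The union embeds isometrically into a Hilbert space because, by Schoenberg's criterion, this is a
condition on finite subsets: the kernel `(d(p, o)² + d(q, o)² - d(p, q)²) / 2` must be positive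
semidefinite. By Mazur–Ulam the members of the chain become nested subspaces, so their union is a
subspace too.

That the closure is a factor is seen on the operations `S(a, q) = (a₁, q₂)` attached to the product
decompositions, since the identities defining such an operation pass to pointwise limits. The
operations of a chain do converge. Let `A ⊆ B` be Hilbert factors through `x` with operations `S`
and `T`. By Pythagoras the `A`- and `B`-coordinates of a point `p` differ by a vector orthogonal to
`A`, of squared length `d(S(x, p), x)² - d(T(x, p), x)²`. Since moving a point along `A` moves it
along `B` by the same vector, `d(S(a, q), T(a, q))²` is at most twice the sum of these differences
for `p = a` and `p = q`. As `d(S(x, p), x)²` is antitone along the chain and nonnegative, `S(a, q)`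
is a Cauchy net.
-/

open Set Filter Topology
open scoped RealInnerProductSpace

universe u v

theorem exists_inner_eq_of_posSemidef {Y : Type u} {k : Matrix Y Y ℝ} (hk : k.PosSemidef) :
    ∃ (H : Type u) (_ : NormedAddCommGroup H) (_ : InnerProductSpace ℝ H) (_ : CompleteSpace H)
      (φ : Y → H), ∀ p q, ⟪φ p, φ q⟫ = k p q := by
  let K : Matrix Y Y (ℝ →L[ℝ] ℝ) := .of fun p q ↦ k p q • .id ℝ ℝ
  have hsymm (p q : Y) : k q p = k p q := by simpa using hk.isHermitian.apply p q
  have hKsymm : K.IsHermitian := by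
    ext p q
    simp [K, ContinuousLinearMap.star_eq_adjoint, ContinuousLinearMap.adjoint_id, hsymm p q]
  have hKnonneg (c : Y →₀ ℝ) : 0 ≤ c.sum fun p a ↦ c.sum fun q b ↦ ⟪K q p a, b⟫ := by
    rw [Finsupp.sum_comm]
    simpa [K, mul_comm, mul_left_comm, mul_assoc] using hk.2 c
  have : Fact K.PosSemidef :=
    ⟨((RKHS.posSemidef_tfae (K := K)).out 0 2 rfl rfl).2 ⟨hKsymm, hKnonneg⟩⟩
  refine ⟨RKHS.OfKernel K, inferInstance, inferInstance, inferInstance,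
    fun p ↦ RKHS.kerFun (RKHS.OfKernel K) p 1, fun p q ↦ ?_⟩
  rw [← RKHS.kernel_inner, RKHS.OfKernel.kernel_ofKernel]
  simp [K, hsymm p q]

/-- The kernel that becomes the inner product once `o` is taken as the origin: it recovers, by
polarization, inner products from the distances of a subset of an inner product space. -/
noncomputable def polarKernel {Y : Type*} [MetricSpace Y] (o : Y) : Matrix Y Y ℝ :=
  .of fun p q ↦ (dist p o ^ 2 + dist q o ^ 2 - dist p q ^ 2) / 2

theorem polarKernel_eq_inner {Y E : Type*} [MetricSpace Y] [NormedAddCommGroup E]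
    [InnerProductSpace ℝ E] {f : Y → E} (hf : Isometry f) (o p q : Y) :
    polarKernel o p q = ⟪f p - f o, f q - f o⟫ := by
  have h := norm_sub_sq_real (f p - f o) (f q - f o)
  rw [sub_sub_sub_cancel_right] at h
  simp only [polarKernel, Matrix.of_apply, ← hf.dist_eq, dist_eq_norm]
  linarith

theorem posSemidef_polarKernel {Y : Type u} [MetricSpace Y]
    (h : ∀ s : Finset Y, ∃ (E : Type v) (_ : NormedAddCommGroup E) (_ : InnerProductSpace ℝ E)
      (f : s → E), Isometry f) (o : Y) : (polarKernel o).PosSemidef := by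
  classical
  refine ⟨by ext p q; simp [polarKernel, dist_comm, add_comm], fun c ↦ ?_⟩
  let s : Finset Y := insert o c.support
  obtain ⟨E, _, _, f, hf⟩ := h s
  have ho : o ∈ s := Finset.mem_insert_self _ _
  let g : Y → E := fun p ↦ if hp : p ∈ s then f ⟨p, hp⟩ - f ⟨o, ho⟩ else 0
  have hg : ∀ p ∈ c.support, ∀ q ∈ c.support, polarKernel o p q = ⟪g p, g q⟫ := by
    intro p hp q hq
    have hp' : p ∈ s := Finset.mem_insert_of_mem hp
    have hq' : q ∈ s := Finset.mem_insert_of_mem hq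
    simp only [g, dif_pos hp', dif_pos hq']
    exact polarKernel_eq_inner hf ⟨o, ho⟩ ⟨p, hp'⟩ ⟨q, hq'⟩
  calc 0 ≤ ⟪∑ p ∈ c.support, c p • g p, ∑ p ∈ c.support, c p • g p⟫ := real_inner_self_nonneg
    _ = ∑ p ∈ c.support, ∑ q ∈ c.support, c p * polarKernel o p q * c q := by
      simp only [sum_inner, inner_sum, real_inner_smul_left, real_inner_smul_right]
      refine Finset.sum_congr rfl fun p hp ↦ Finset.sum_congr rfl fun q hq ↦ ?_
      rw [hg p hp q hq, real_inner_comm]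
      ring

theorem exists_isometry_of_forall_finset {Y : Type u} [MetricSpace Y] [Nonempty Y]
    (h : ∀ s : Finset Y, ∃ (E : Type v) (_ : NormedAddCommGroup E) (_ : InnerProductSpace ℝ E)
      (f : s → E), Isometry f) :
    ∃ (H : Type u) (_ : NormedAddCommGroup H) (_ : InnerProductSpace ℝ H) (_ : CompleteSpace H)
      (φ : Y → H), Isometry φ := by
  let o : Y := Classical.arbitrary Y
  obtain ⟨H, _, _, _, φ, hφ⟩ := exists_inner_eq_of_posSemidef (posSemidef_polarKernel h o)
  refine ⟨H, inferInstance, inferInstance, inferInstance, φ, .of_dist_eq fun p q ↦ ?_⟩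
  rw [dist_eq_norm, ← sq_eq_sq₀ (norm_nonneg _) dist_nonneg, norm_sub_sq_real,
    ← real_inner_self_eq_norm_sq, ← real_inner_self_eq_norm_sq, hφ, hφ, hφ]
  simp only [polarKernel, Matrix.of_apply, dist_self]
  ring

section HilbertSubset

variable {X : Type} [MetricSpace X] {A : Set X} {x : X}

theorem IsHilbertSubset.exists_isometry (hA : IsHilbertSubset A) (hx : x ∈ A) :
    ∃ (H : Type) (_ : NormedAddCommGroup H) (_ : InnerProductSpace ℝ H) (_ : CompleteSpace H)
      (e : H → X), Isometry e ∧ e 0 = x ∧ range e = A := by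
  obtain ⟨H, _, _, _, f, hf, hsurj⟩ := hA
  let F : A ≃ᵢ H := ⟨.ofBijective f ⟨hf.injective, hsurj⟩, hf⟩
  let G : H ≃ᵢ A := (IsometryEquiv.addRight (f ⟨x, hx⟩)).trans F.symm
  refine ⟨H, inferInstance, inferInstance, inferInstance, fun v ↦ G v,
    isometry_subtype_coe.comp G.isometry, ?_, ?_⟩
  · have : F.symm (f ⟨x, hx⟩) = ⟨x, hx⟩ := F.symm_apply_apply _
    simp [G, this]
  · exact (G.surjective.range_comp Subtype.val).trans Subtype.range_coe

theorem isHilbertSubset_range {H : Type} [NormedAddCommGroup H] [InnerProductSpace ℝ H]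
    [CompleteSpace H] {e : H → X} (he : Isometry e) : IsHilbertSubset (range e) :=
  ⟨H, inferInstance, inferInstance, inferInstance, he.isometryEquivOnRange.symm,
    he.isometryEquivOnRange.symm.isometry, he.isometryEquivOnRange.symm.surjective⟩

theorem isHilbertSubset_closure_range [CompleteSpace X] {V : Type} [NormedAddCommGroup V]
    [InnerProductSpace ℝ V] {g : V → X} (hg : Isometry g) :
    IsHilbertSubset (closure (range g)) := by
  let G := UniformSpace.Completion.extension g
  have hG : Isometry G := hg.completion_extension
  have hGg : G ∘ (↑) = g := funext (UniformSpace.Completion.extension_coe hg.uniformContinuous)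
  rw [← hGg, range_comp, hG.isClosedEmbedding.closure_image_eq,
    UniformSpace.Completion.denseRange_coe.closure_range, image_univ]
  exact isHilbertSubset_range hG

theorem isHilbertSubset_closure_of_range_eq_submodule [CompleteSpace X] {H : Type}
    [NormedAddCommGroup H] [InnerProductSpace ℝ H] {φ : A → H} (hφ : Isometry φ)
    {K : Submodule ℝ H} (hK : range φ = K) : IsHilbertSubset (closure A) := by
  let F : A ≃ᵢ K := hφ.isometryEquivOnRange.trans ⟨.setCongr hK, fun _ _ ↦ rfl⟩
  have hrange : range (Subtype.val ∘ F.symm) = A := by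
    rw [F.symm.surjective.range_comp, Subtype.range_coe]
  rw [← hrange]
  exact isHilbertSubset_closure_range (isometry_subtype_coe.comp F.symm.isometry)

theorem IsHilbertSubset.exists_submodule_eq_range (hA : IsHilbertSubset A)
    {E : Type*} [NormedAddCommGroup E] [NormedSpace ℝ E] [StrictConvexSpace ℝ E]
    {f : A → E} (hf : Isometry f) (h0 : 0 ∈ range f) :
    ∃ K : Submodule ℝ E, (K : Set E) = range f := by
  obtain ⟨⟨x, hx⟩, hfx⟩ := h0
  obtain ⟨H, _, _, _, e, he, he0, rfl⟩ := hA.exists_isometry hx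
  let g : H → E := f ∘ he.isometryEquivOnRange
  have hg : Isometry g := hf.comp he.isometryEquivOnRange.isometry
  have hg0 : g 0 = 0 := (congrArg f (Subtype.ext he0)).trans hfx
  have hlin : ⇑hg.affineIsometryOfStrictConvexSpace.linearIsometry = g := by
    ext v
    simpa [hg0] using (hg.affineIsometryOfStrictConvexSpace.map_vadd 0 v).symm
  refine ⟨hg.affineIsometryOfStrictConvexSpace.linearIsometry.toLinearMap.range, ?_⟩
  rw [LinearMap.coe_range, LinearIsometry.coe_toLinearMap, hlin]
  exact he.isometryEquivOnRange.surjective.range_comp f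

theorem IsHilbertSubset.exists_submodule_image_eq (hA : IsHilbertSubset A)
    {E : Type*} [NormedAddCommGroup E] [NormedSpace ℝ E] [StrictConvexSpace ℝ E] {e : E → X}
    (he : Isometry e) (hsub : A ⊆ range e) (h0 : e 0 ∈ A) : ∃ K : Submodule ℝ E, e '' K = A := by
  let f : A → E := he.isometryEquivOnRange.symm ∘ inclusion hsub
  have hef : e ∘ f = Subtype.val := funext fun p ↦
    congrArg Subtype.val (he.isometryEquivOnRange.apply_symm_apply (inclusion hsub p))
  have hf : Isometry f := he.isometryEquivOnRange.symm.isometry.comp fun _ _ ↦ rfl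
  obtain ⟨K, hK⟩ := hA.exists_submodule_eq_range hf
    ⟨⟨e 0, h0⟩, he.injective (congrFun hef ⟨e 0, h0⟩)⟩
  exact ⟨K, by rw [hK, ← range_comp, hef, Subtype.range_coe]⟩

section DirectedUnion

variable {ι : Type*} [Preorder ι] [IsDirectedOrder ι] [Nonempty ι] {A : ι → Set X}

theorem exists_isometry_iUnion (hmono : Monotone A) (hA : ∀ i, IsHilbertSubset (A i))
    (hx : x ∈ ⋃ i, A i) :
    ∃ (H : Type) (_ : NormedAddCommGroup H) (_ : InnerProductSpace ℝ H) (φ : ⋃ i, A i → H),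
      Isometry φ ∧ φ ⟨x, hx⟩ = 0 := by
  classical
  have : Nonempty (⋃ i, A i) := ⟨x, hx⟩
  have hfin (s : Finset (⋃ i, A i)) : ∃ (E : Type) (_ : NormedAddCommGroup E)
      (_ : InnerProductSpace ℝ E) (f : s → E), Isometry f := by
    have hs : ((s.image Subtype.val : Finset X) : Set X) ⊆ ⋃ i, A i := by
      rw [Finset.coe_image]
      exact image_subset_iff.2 fun p _ ↦ p.2
    obtain ⟨i, hi⟩ := hmono.directed_le.exists_mem_subset_of_finset_subset_biUnion hs
    obtain ⟨E, _, _, _, f, hf, -⟩ := hA i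
    exact ⟨E, inferInstance, inferInstance,
      fun p ↦ f ⟨p, hi (Finset.mem_image_of_mem _ p.2)⟩, fun p q ↦ hf _ _⟩
  obtain ⟨H, _, _, _, ψ, hψ⟩ := exists_isometry_of_forall_finset hfin
  exact ⟨H, inferInstance, inferInstance, fun p ↦ ψ p - ψ ⟨x, hx⟩,
    (IsometryEquiv.subRight (ψ ⟨x, hx⟩)).isometry.comp hψ, sub_self _⟩

theorem isHilbertSubset_closure_iUnion [CompleteSpace X] (hmono : Monotone A)
    (hA : ∀ i, IsHilbertSubset (A i)) (hx : ∀ i, x ∈ A i) :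
    IsHilbertSubset (closure (⋃ i, A i)) := by
  have hxU : x ∈ ⋃ i, A i := mem_iUnion.2 ⟨Classical.arbitrary ι, hx _⟩
  obtain ⟨H, _, _, φ, hφ, hφx⟩ := exists_isometry_iUnion hmono hA hxU
  let φA (i : ι) : A i → H := φ ∘ inclusion (subset_iUnion A i)
  have hφA (i : ι) : Isometry (φA i) := hφ.comp fun _ _ ↦ rfl
  choose K hK using fun i ↦ (hA i).exists_submodule_eq_range (hφA i) ⟨⟨x, hx i⟩, hφx⟩
  have hKmono : Monotone K := fun i j hij ↦ by
    rw [← SetLike.coe_subset_coe, hK, hK]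
    rintro _ ⟨p, rfl⟩
    exact ⟨inclusion (hmono hij) p, rfl⟩
  have hrange : range φ = (⨆ i, K i : Submodule ℝ H) := by
    simp only [Submodule.coe_iSup_of_directed _ hKmono.directed_le, hK]
    refine Subset.antisymm ?_ (iUnion_subset fun i ↦ range_comp_subset_range _ _)
    rintro _ ⟨⟨p, hp⟩, rfl⟩
    obtain ⟨i, hi⟩ := mem_iUnion.1 hp
    exact mem_iUnion.2 ⟨i, ⟨p, hi⟩, rfl⟩
  exact isHilbertSubset_closure_of_range_eq_submodule hφ hrange

end DirectedUnion

end HilbertSubset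

/-- The operation `S a q = (a₁, q₂)` of a decomposition of `X` into an ℓ²-product of two factors,
described without mentioning the factors so that it makes sense to pass to limits: an idempotent
operation forgetting the second coordinate of its first argument and the first coordinate of its
second one, which satisfies the ℓ² distance formula. -/
structure IsL2Band {X : Type*} [MetricSpace X] (S : X → X → X) : Prop where
  idem (p : X) : S p p = p
  left (a q r : X) : S (S a q) r = S a r
  right (a q r : X) : S a (S q r) = S a r
  dist_sq (a b q r s t : X) :
    dist (S a q) (S b r) ^ 2 = dist (S a s) (S b s) ^ 2 + dist (S t q) (S t r) ^ 2

/-- The fiber through `x` of the first factor: the points with the second coordinate of `x`. -/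
def bandFiber {X : Type*} (S : X → X → X) (x : X) : Set X := {p | S x p = x}

namespace IsL2Band

section Basic

variable {X : Type*} [MetricSpace X] {S T : X → X → X} {x p q : X}

theorem mem_bandFiber_iff (hS : IsL2Band S) : p ∈ bandFiber S x ↔ S p x = p := by
  refine ⟨fun (h : S x p = x) ↦ ?_, fun h ↦ ?_⟩
  · rw [← h, hS.right, hS.idem]
  · change S x p = x
    rw [← h, hS.right, hS.idem]

theorem apply_mem_bandFiber (hS : IsL2Band S) (p x : X) : S p x ∈ bandFiber S x :=
  (hS.right x p x).trans (hS.idem x)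

theorem dist_sq_eq (hS : IsL2Band S) (p q s t : X) :
    dist p q ^ 2 = dist (S p s) (S q s) ^ 2 + dist (S t p) (S t q) ^ 2 := by
  simpa only [hS.idem] using hS.dist_sq p q p q s t

theorem dist_left_le (hS : IsL2Band S) (p q s : X) : dist (S p s) (S q s) ≤ dist p q := by
  rw [← sq_le_sq₀ dist_nonneg dist_nonneg, hS.dist_sq_eq p q s s]
  exact le_add_of_nonneg_right (sq_nonneg _)

theorem dist_right_le (hS : IsL2Band S) (t p q : X) : dist (S t p) (S t q) ≤ dist p q := by
  rw [← sq_le_sq₀ dist_nonneg dist_nonneg, hS.dist_sq_eq p q t t]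
  exact le_add_of_nonneg_left (sq_nonneg _)

theorem dist_sq_eq_of_mem_bandFiber (hS : IsL2Band S) (p : X) (hq : q ∈ bandFiber S x) :
    dist p q ^ 2 = dist (S p x) q ^ 2 + dist (S x p) x ^ 2 := by
  have hxq : S x q = x := hq
  rw [hS.dist_sq_eq p q x x, hS.mem_bandFiber_iff.1 hq, hxq]

theorem dist_sq_of_bandFiber_subset (hS : IsL2Band S) (hT : IsL2Band T)
    (hST : bandFiber S x ⊆ bandFiber T x) (p : X) :
    dist (T p x) (S p x) ^ 2 = dist (S x p) x ^ 2 - dist (T x p) x ^ 2 := by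
  have h₁ := hS.dist_sq_eq_of_mem_bandFiber p (hS.apply_mem_bandFiber p x)
  have h₂ := hT.dist_sq_eq_of_mem_bandFiber p (hST (hS.apply_mem_bandFiber p x))
  rw [dist_self] at h₁
  linarith

end Basic

section Limit

variable {X ι : Type*} [MetricSpace X] {S : ι → X → X → X} {T : X → X → X}

theorem of_tendsto {l : Filter ι} [l.NeBot] (hS : ∀ i, IsL2Band (S i))
    (hT : ∀ a q, Tendsto (S · a q) l (𝓝 (T a q))) : IsL2Band T where
  idem p := tendsto_nhds_unique (hT p p) (by simp only [(hS _).idem, tendsto_const_nhds])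
  left a q r := by
    refine tendsto_nhds_unique (hT _ r) ((hT a r).congr_dist ?_)
    refine squeeze_zero (fun _ ↦ dist_nonneg) (fun i ↦ ?_)
      (tendsto_iff_dist_tendsto_zero.1 (hT a q))
    rw [← (hS i).left a q r]
    exact (hS i).dist_left_le _ _ _
  right a q r := by
    refine tendsto_nhds_unique (hT a _) ((hT a r).congr_dist ?_)
    refine squeeze_zero (fun _ ↦ dist_nonneg) (fun i ↦ ?_)
      (tendsto_iff_dist_tendsto_zero.1 (hT q r))
    rw [← (hS i).right a q r]
    exact (hS i).dist_right_le _ _ _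
  dist_sq a b q r s t := by
    refine tendsto_nhds_unique (((hT a q).dist (hT b r)).pow 2) ?_
    simp only [(hS _).dist_sq a b q r s t]
    exact (((hT a s).dist (hT b s)).pow 2).add (((hT t q).dist (hT t r)).pow 2)

theorem isClosed_bandFiber {T : X → X → X} (hT : IsL2Band T) (x : X) : IsClosed (bandFiber T x) :=
  isClosed_eq (LipschitzWith.mk_one (hT.dist_right_le x)).continuous continuous_const

theorem bandFiber_eq_closure_iUnion [Preorder ι] [IsDirectedOrder ι] [Nonempty ι] {x : X}
    (hS : ∀ i, IsL2Band (S i)) (hT : ∀ a q, Tendsto (S · a q) atTop (𝓝 (T a q)))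
    (hmono : Monotone fun i ↦ bandFiber (S i) x) :
    bandFiber T x = closure (⋃ i, bandFiber (S i) x) := by
  have hTband := of_tendsto hS hT
  refine Subset.antisymm (fun p hp ↦ ?_)
    (closure_minimal (iUnion_subset fun i p hp ↦ ?_) (hTband.isClosed_bandFiber x))
  · have hlim := hT p x
    rw [hTband.mem_bandFiber_iff.1 hp] at hlim
    exact mem_closure_of_tendsto hlim
      (.of_forall fun i ↦ mem_iUnion.2 ⟨i, (hS i).apply_mem_bandFiber p x⟩)
  · refine tendsto_nhds_unique (hT x p) (tendsto_const_nhds.congr' ?_)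
    filter_upwards [eventually_ge_atTop i] with j hij
    exact (hmono hij hp).symm

end Limit

section Comparison

variable {X H : Type*} [MetricSpace X] [NormedAddCommGroup H] [InnerProductSpace ℝ H]
  {S T : X → X → X} {x : X} {e : H → X} {K : Submodule ℝ H} {u v : X → H}

theorem inner_coord_sub_eq_zero (hS : IsL2Band S) (hT : IsL2Band T)
    (hST : bandFiber S x ⊆ bandFiber T x) (he : Isometry e) (hK : MapsTo e K (bandFiber S x))
    (hu : ∀ p, u p ∈ K) (heu : ∀ p, e (u p) = S p x) (hev : ∀ p, e (v p) = T p x)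
    (p : X) {k : H} (hk : k ∈ K) : ⟪v p - u p, k⟫ = 0 := by
  have hsub (k) (hk : k ∈ K) : ‖v p - u p + k‖ ^ 2 - ‖k‖ ^ 2 =
      dist (S x p) x ^ 2 - dist (T x p) x ^ 2 := by
    have hmem : e (u p - k) ∈ bandFiber S x := hK (K.sub_mem (hu p) hk)
    have h₁ := hS.dist_sq_eq_of_mem_bandFiber p hmem
    have h₂ := hT.dist_sq_eq_of_mem_bandFiber p (hST hmem)
    rw [← heu, he.dist_eq, dist_eq_norm, sub_sub_cancel] at h₁
    rw [← hev, he.dist_eq, dist_eq_norm, ← sub_add] at h₂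
    linarith
  have h0 := hsub 0 K.zero_mem
  have hk' := hsub k hk
  rw [norm_add_sq_real] at hk'
  simp only [add_zero, norm_zero] at h0
  linarith

/-- Both coordinates of `S a q` with respect to `T` are forced by Pythagoras: the distance between
`S a q` and `q` is already attained in the direction of `K`. -/
theorem coords_apply (hS : IsL2Band S) (hT : IsL2Band T)
    (hST : bandFiber S x ⊆ bandFiber T x) (he : Isometry e) (hK : MapsTo e K (bandFiber S x))
    (hu : ∀ p, u p ∈ K) (heu : ∀ p, e (u p) = S p x) (hev : ∀ p, e (v p) = T p x)
    (a q : X) : T x (S a q) = T x q ∧ v (S a q) - u a = v q - u q := by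
  have hua : u (S a q) = u a := he.injective (by rw [heu, heu, hS.left])
  have horth := hS.inner_coord_sub_eq_zero hT hST he hK hu heu hev
  set r := S a q with hr
  let w : H := (v r - u r) - (v q - u q)
  have hw : ⟪w, u a - u q⟫ = 0 := by
    rw [inner_sub_left, horth r (K.sub_mem (hu a) (hu q)), horth q (K.sub_mem (hu a) (hu q)),
      sub_zero]
  have hdistS : dist r q ^ 2 = ‖u a - u q‖ ^ 2 := by
    rw [hS.dist_sq_eq r q x x, ← heu, ← heu, he.dist_eq, dist_eq_norm, hua, hr, hS.right, dist_self]
    ring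
  have hdistT : dist r q ^ 2 = ‖w‖ ^ 2 + ‖u a - u q‖ ^ 2 + dist (T x r) (T x q) ^ 2 := by
    have hv : v r - v q = w + (u a - u q) := by simp only [w, hua]; abel
    rw [hT.dist_sq_eq r q x x, ← hev, ← hev, he.dist_eq, dist_eq_norm, hv, norm_add_sq_real, hw]
    ring
  have hsum : ‖w‖ ^ 2 + dist (T x r) (T x q) ^ 2 = 0 := by linarith
  obtain ⟨hw0, hd0⟩ := (add_eq_zero_iff_of_nonneg (sq_nonneg _) (sq_nonneg _)).1 hsum
  refine ⟨dist_eq_zero.1 (sq_eq_zero_iff.1 hd0), ?_⟩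
  rw [← hua]
  exact sub_eq_zero.1 (norm_eq_zero.1 (sq_eq_zero_iff.1 hw0))

theorem dist_sq_le_of_bandFiber_subset (hS : IsL2Band S) (hT : IsL2Band T) (he : Isometry e)
    (hK : e '' K = bandFiber S x) (hST : bandFiber S x ⊆ bandFiber T x)
    (hTe : bandFiber T x ⊆ range e) (a q : X) :
    dist (S a q) (T a q) ^ 2 ≤ 2 * (dist (S x a) x ^ 2 + dist (S x q) x ^ 2) -
      2 * (dist (T x a) x ^ 2 + dist (T x q) x ^ 2) := by
  choose u hu heu using fun p ↦ hK.symm.subset (hS.apply_mem_bandFiber p x)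
  choose v hev using fun p ↦ hTe (hT.apply_mem_bandFiber p x)
  have hmaps : MapsTo e K (bandFiber S x) := hK ▸ mapsTo_image e K
  obtain ⟨hx, hv⟩ := hS.coords_apply hT hST he hmaps hu heu hev a q
  have hnorm (p : X) : ‖v p - u p‖ ^ 2 = dist (S x p) x ^ 2 - dist (T x p) x ^ 2 := by
    rw [← hS.dist_sq_of_bandFiber_subset hT hST, ← heu, ← hev, he.dist_eq, dist_eq_norm]
  have hdiff : v (S a q) - v a = (v q - u q) - (v a - u a) := by rw [← hv]; abel
  calc dist (S a q) (T a q) ^ 2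
    _ = ‖(v q - u q) - (v a - u a)‖ ^ 2 := by
      rw [hT.dist_sq_eq (S a q) (T a q) x x, hT.left, hT.right, hx, dist_self, ← hev, ← hev,
        he.dist_eq, dist_eq_norm, hdiff]
      ring
    _ ≤ 2 * (‖v q - u q‖ ^ 2 + ‖v a - u a‖ ^ 2) := by
      nlinarith [parallelogram_law_with_norm ℝ (v q - u q) (v a - u a),
        norm_nonneg ((v q - u q) + (v a - u a))]
    _ = _ := by rw [hnorm, hnorm]; ring

end Comparison

end IsL2Band

theorem cauchySeq_of_dist_sq_le_sub {α ι : Type*} [PseudoMetricSpace α] [Preorder ι]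
    [IsDirectedOrder ι] [Nonempty ι] {u : ι → α} {f : ι → ℝ} (hf : BddBelow (range f))
    (h : ∀ i j, i ≤ j → dist (u i) (u j) ^ 2 ≤ f i - f j) : CauchySeq u := by
  refine Metric.cauchy_iff.2 ⟨inferInstance, fun ε hε ↦ ?_⟩
  obtain ⟨N, hN⟩ : ∃ N, f N < (⨅ i, f i) + (ε / 2) ^ 2 :=
    exists_lt_of_ciInf_lt (lt_add_of_pos_right _ (by positivity))
  have hclose (i) (hi : N ≤ i) : dist (u N) (u i) < ε / 2 := by
    refine lt_of_pow_lt_pow_left₀ 2 (by positivity) ?_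
    linarith [h N i hi, ciInf_le hf i]
  refine ⟨u '' Ici N, image_mem_map (Ici_mem_atTop N), ?_⟩
  rintro _ ⟨i, hi, rfl⟩ _ ⟨j, hj, rfl⟩
  linarith [dist_triangle_left (u i) (u j) (u N), hclose i hi, hclose j hj]

section FactorSubset

variable {X : Type} [MetricSpace X] {A : Set X} {x : X}

theorem isFactorSubset_bandFiber {S : X → X → X} (hS : IsL2Band S) (x : X) :
    IsFactorSubset (bandFiber S x) x := by
  refine ⟨hS.idem x, range (S · x), range (S x ·), inferInstance, inferInstance,
    fun p ↦ (⟨S p x, p, rfl⟩, ⟨S x p, p, rfl⟩), ⟨⟨fun p q h ↦ ?_, ?_⟩, ?_⟩, ?_⟩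
  · have hfst : S p x = S q x := congrArg (fun z ↦ (z.1 : X)) h
    have hsnd : S x p = S x q := congrArg (fun z ↦ (z.2 : X)) h
    rw [← dist_eq_zero, ← sq_eq_zero_iff, hS.dist_sq_eq p q x x, hfst, hsnd]
    simp
  · rintro ⟨⟨_, a, rfl⟩, ⟨_, b, rfl⟩⟩
    exact ⟨S a b, by simp only [hS.left, hS.right]⟩
  · exact fun p q ↦ hS.dist_sq_eq p q x x
  · ext p
    simp [bandFiber, hS.idem, Subtype.ext_iff]

theorem IsFactorSubset.exists_isL2Band (hA : IsFactorSubset A x) :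
    ∃ S : X → X → X, IsL2Band S ∧ A = bandFiber S x := by
  obtain ⟨-, Y, Z, _, _, Φ, ⟨hbij, hdist⟩, rfl⟩ := hA
  let Ψ := Equiv.ofBijective Φ hbij
  have hΦ (y : Y × Z) : Φ (Ψ.symm y) = y := Ψ.apply_symm_apply y
  refine ⟨fun a q ↦ Ψ.symm ((Φ a).1, (Φ q).2),
    ⟨fun p ↦ Ψ.symm_apply_apply p, ?_, ?_, ?_⟩, ?_⟩
  · simp [hΦ]
  · simp [hΦ]
  · simp [hdist, hΦ]
  · ext p
    simp [bandFiber, ← hbij.1.eq_iff, hΦ, Prod.ext_iff]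

theorem isFactorSubset_closure_iUnion [CompleteSpace X] {ι : Type*} [Preorder ι]
    [IsDirectedOrder ι] [Nonempty ι] {A : ι → Set X} (hmono : Monotone A)
    (hfac : ∀ i, IsFactorSubset (A i) x) (hA : ∀ i, IsHilbertSubset (A i)) :
    IsFactorSubset (closure (⋃ i, A i)) x := by
  choose S hS hSA using fun i ↦ (hfac i).exists_isL2Band
  obtain rfl : A = fun i ↦ bandFiber (S i) x := funext hSA
  have hsub (i : ι) : bandFiber (S i) x ⊆ closure (⋃ i, bandFiber (S i) x) :=
    (subset_iUnion (fun i ↦ bandFiber (S i) x) i).trans subset_closure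
  have hx (i : ι) : x ∈ bandFiber (S i) x := (hS i).idem x
  obtain ⟨H, _, _, _, e, he, he0, hrange⟩ :=
    (isHilbertSubset_closure_iUnion hmono hA hx).exists_isometry
      (hsub _ (hx (Classical.arbitrary ι)))
  choose K hK using fun i ↦
    (hA i).exists_submodule_image_eq he (hrange ▸ hsub i) (he0.symm ▸ hx i)
  have hcauchy (a q : X) : CauchySeq (S · a q) := by
    refine cauchySeq_of_dist_sq_le_sub
      (f := fun i ↦ 2 * (dist (S i x a) x ^ 2 + dist (S i x q) x ^ 2))
      ⟨0, forall_mem_range.2 fun i ↦ by positivity⟩ fun i j hij ↦ ?_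
    exact (hS i).dist_sq_le_of_bandFiber_subset (hS j) he (hK i) (hmono hij) (hrange ▸ hsub j) a q
  choose T hT using fun a q ↦ cauchySeq_tendsto_of_complete (hcauchy a q)
  rw [← IsL2Band.bandFiber_eq_closure_iUnion hS hT hmono]
  exact isFactorSubset_bandFiber (IsL2Band.of_tendsto hS hT) x

theorem isFactorSubset_singleton (x : X) : IsFactorSubset {x} x := by
  have hband : IsL2Band fun _ q : X ↦ q := ⟨by simp, by simp, by simp, by simp⟩
  simpa [bandFiber] using isFactorSubset_bandFiber hband x

theorem isHilbertSubset_singleton (x : X) : IsHilbertSubset ({x} : Set X) := by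
  simpa using isHilbertSubset_range (e := fun _ : EuclideanSpace ℝ (Fin 0) ↦ x)
    isometry_subsingleton

end FactorSubset

/-- the family `𝓕⁰ₓ` of factor subsets through `x` isometric to real
Hilbert spaces has a maximal element. -/
theorem exists_maximal_hilbert_factor {X : Type} [MetricSpace X] [CompleteSpace X]
    (x : X) :
    ∃ A : Set X, (IsFactorSubset A x ∧ IsHilbertSubset A) ∧
      ∀ B : Set X, IsFactorSubset B x → IsHilbertSubset B → A ⊆ B → B = A := by
  let F : Set (Set X) := {A | IsFactorSubset A x ∧ IsHilbertSubset A}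
  have hub : ∀ c ⊆ F, IsChain (· ⊆ ·) c → c.Nonempty → ∃ ub ∈ F, ∀ A ∈ c, A ⊆ ub := by
    intro c hcF hc hne
    have : Nonempty c := hne.to_subtype
    have : IsDirectedOrder c := hc.directedOn.isDirectedOrder
    have hmono : Monotone ((↑) : c → Set X) := Subtype.mono_coe _
    have hfac (A : c) : IsFactorSubset (A : Set X) x := (hcF A.2).1
    have hhil (A : c) : IsHilbertSubset (A : Set X) := (hcF A.2).2
    exact ⟨closure (⋃ A : c, A), ⟨isFactorSubset_closure_iUnion hmono hfac hhil,
      isHilbertSubset_closure_iUnion hmono hhil fun A ↦ (hfac A).1⟩,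
      fun A hA ↦ (subset_iUnion ((↑) : c → Set X) ⟨A, hA⟩).trans subset_closure⟩
  obtain ⟨M, -, hM⟩ := zorn_subset_nonempty F hub {x}
    ⟨isFactorSubset_singleton x, isHilbertSubset_singleton x⟩
  exact ⟨M, hM.prop, fun B hBfac hBhil hMB ↦ (hM.eq_of_subset ⟨hBfac, hBhil⟩ hMB).symm⟩
end

section
/- (Main theorem) Every complete metric space X decomposes as an ℓ²-direct product X ≅ Y × H where H is a real Hilbert space (possibly finite- or zero-dimensional) and Y contains no splitting lines; moreover this decomposition is unique up to isometry of the factors. -/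
/-!
A translation of an inner product space by `a` is governed by the affine function `⟪a, ·⟫`. On any
metric space `X`, the functions all of whose real multiples govern translations in this sense form a
vector space, in which two functions are identified if they differ by a constant. Evaluating one
function along the translation of another is an inner product on it, and it is complete if `X` is;
by Riesz, each point of `X` acquires a coordinate in this Hilbert space `H`, so `X` splits off `H`,
and the remaining factor `Y` carries no nonconstant function of this kind, which is the same as
having no splitting line. If `X` is any product `Y' × H'` with `Y'` free of splitting lines,
the translations along `H'` exhaust `H`, because one orthogonal to them would descend to `Y'`. So
the fibers of both projections are determined by `X` alone.
-/

section Translations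

variable {X : Type*} [MetricSpace X]

/-- `τ` is a translation of `X` with potential `f`. In an inner product space the model is
`τ x = x + a` and `f x = ⟪a, x⟫`; the squared length `‖a‖ ^ 2` is recovered as `f (τ x) - f x`. -/
def IsTranslation (τ : X → X) (f : X → ℝ) : Prop :=
  ∀ x y, dist (τ x) y ^ 2 = dist x y ^ 2 + f x + f (τ x) - 2 * f y

/-- `f` generates a one-parameter family of translations of `X`: every real multiple of `f` is the
potential of a translation. -/
def IsTranslationPotential (f : X → ℝ) : Prop :=
  ∀ s : ℝ, ∃ τ : X → X, IsTranslation τ (s • f)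

namespace IsTranslation

variable {τ σ : X → X} {f g : X → ℝ}

theorem of_dist_sq {c : ℝ}
    (h : ∀ x y, dist (τ x) y ^ 2 = dist x y ^ 2 + 2 * (f x - f y) + c) : IsTranslation τ f := by
  intro x y
  have h_fixed := h x (τ x)
  have h_self := h x x
  rw [dist_self, dist_comm x] at h_fixed
  rw [dist_self] at h_self
  linarith [h x y]

protected theorem id : IsTranslation (id : X → X) 0 := by
  intro x y
  simp

theorem sub_const (h : IsTranslation τ f) (c : ℝ) : IsTranslation τ (fun x => f x - c) := by
  intro x y
  rw [h x y]
  ring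

theorem dist_self_sq (h : IsTranslation τ f) (x : X) : dist (τ x) x ^ 2 = f (τ x) - f x := by
  rw [h x x, dist_self]
  ring

/-- Compute `dist (τ x) (σ y) ^ 2` by moving either point first. -/
theorem apply_sub_apply_comm (hτ : IsTranslation τ f) (hσ : IsTranslation σ g) (x y : X) :
    f (σ y) - f y = g (τ x) - g x := by
  have hx := hτ x y
  have hx' := hτ x (σ y)
  have hy := hσ y x
  have hy' := hσ y (τ x)
  have hx_const := hτ.dist_self_sq x
  rw [dist_comm] at hy hy'
  rw [dist_comm y x] at hy
  rw [dist_comm y] at hy'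
  linarith

theorem comp (hτ : IsTranslation τ f) (hσ : IsTranslation σ g) :
    IsTranslation (τ ∘ σ) (f + g) := by
  intro x y
  simp only [Function.comp_apply, Pi.add_apply]
  rw [hτ (σ x) y, hσ x y]
  linarith [hτ.apply_sub_apply_comm hσ (σ x) x]

theorem unique (hτ : IsTranslation τ f) (hσ : IsTranslation σ f) : τ = σ := by
  funext x
  have hτσ := hτ x (σ x)
  have hστ := hσ x (τ x)
  have hdist : dist (τ x) (σ x) ^ 2 = 0 := by
    rw [dist_comm x, hσ.dist_self_sq] at hτσ
    rw [dist_comm x, hτ.dist_self_sq, dist_comm] at hστ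
    linarith
  simpa using hdist

end IsTranslation

/-- The potentials that vanish at `x₀`. The base point serves to pick one representative of each
class of potentials modulo constants. -/
def translationPotentials (x₀ : X) : Submodule ℝ (X → ℝ) where
  carrier := {f | f x₀ = 0 ∧ IsTranslationPotential f}
  zero_mem' := ⟨rfl, fun s => ⟨id, by simpa using IsTranslation.id⟩⟩
  add_mem' := by
    rintro f g ⟨hf₀, hf⟩ ⟨hg₀, hg⟩
    refine ⟨by simp [hf₀, hg₀], fun s => ?_⟩
    obtain ⟨τ, hτ⟩ := hf s
    obtain ⟨σ, hσ⟩ := hg s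
    exact ⟨τ ∘ σ, by simpa only [smul_add] using hτ.comp hσ⟩
  smul_mem' := by
    rintro c f ⟨hf₀, hf⟩
    exact ⟨by simp [hf₀], fun s => by simpa only [smul_smul] using hf (s * c)⟩

/-- The space of translations of `X`, encoded by their potentials vanishing at `x₀`. It is a
synonym of `translationPotentials x₀`, so as not to inherit the topology of pointwise convergence
from `X → ℝ`. -/
def TranslationSpace (x₀ : X) : Type _ := translationPotentials x₀

namespace TranslationSpace

open scoped RealInnerProductSpace

variable {x₀ : X}

instance : AddCommGroup (TranslationSpace x₀) :=
  inferInstanceAs (AddCommGroup (translationPotentials x₀))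

instance : Module ℝ (TranslationSpace x₀) :=
  inferInstanceAs (Module ℝ (translationPotentials x₀))

instance : FunLike (TranslationSpace x₀) X ℝ where
  coe v := v.1
  coe_injective := Subtype.val_injective

@[simp] theorem add_apply (v w : TranslationSpace x₀) (x : X) : (v + w) x = v x + w x := rfl

@[simp] theorem smul_apply (c : ℝ) (v : TranslationSpace x₀) (x : X) : (c • v) x = c * v x := rfl

@[simp] theorem apply_base (v : TranslationSpace x₀) : v x₀ = 0 := v.2.1

theorem isTranslationPotential (v : TranslationSpace x₀) : IsTranslationPotential v := v.2.2

theorem exists_isTranslation (v : TranslationSpace x₀) : ∃ τ : X → X, IsTranslation τ v := by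
  simpa only [one_smul] using v.isTranslationPotential 1

/-- The translation of `X` with potential `v`. -/
noncomputable def translate (v : TranslationSpace x₀) : X → X := v.exists_isTranslation.choose

theorem isTranslation_translate (v : TranslationSpace x₀) : IsTranslation v.translate v :=
  v.exists_isTranslation.choose_spec

theorem translate_zero : (0 : TranslationSpace x₀).translate = id :=
  (isTranslation_translate 0).unique IsTranslation.id

theorem translate_add (v w : TranslationSpace x₀) :
    (v + w).translate = v.translate ∘ w.translate :=
  (v + w).isTranslation_translate.unique
    (v.isTranslation_translate.comp w.isTranslation_translate)

theorem sq_sub_le (v : TranslationSpace x₀) (x y : X) :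
    (v x - v y) ^ 2 ≤ v (v.translate x₀) * dist x y ^ 2 := by
  have h_quadratic (s : ℝ) :
      0 ≤ v (v.translate x₀) * (s * s) + 2 * (v x - v y) * s + dist x y ^ 2 := by
    have h_dist := (s • v).isTranslation_translate x y
    have h_sv := v.isTranslation_translate.apply_sub_apply_comm (s • v).isTranslation_translate x₀ x
    simp only [smul_apply, apply_base] at h_dist h_sv
    have h_eq : dist ((s • v).translate x) y ^ 2 =
        v (v.translate x₀) * (s * s) + 2 * (v x - v y) * s + dist x y ^ 2 := by
      linear_combination h_dist + s * h_sv
    exact h_eq ▸ sq_nonneg _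
  have h_discrim := discrim_le_zero h_quadratic
  rw [discrim] at h_discrim
  linarith

/-- The inner product `⟪v, w⟫` is the increment of `v` along the translation with potential `w`. -/
noncomputable abbrev innerCore (x₀ : X) : InnerProductSpace.Core ℝ (TranslationSpace x₀) where
  inner v w := v (w.translate x₀)
  conj_inner_symm v w := by
    simpa using
      w.isTranslation_translate.apply_sub_apply_comm v.isTranslation_translate x₀ x₀
  re_inner_nonneg v := by
    have h_dist := v.isTranslation_translate.dist_self_sq x₀
    rw [apply_base, sub_zero] at h_dist
    exact h_dist ▸ sq_nonneg _
  add_left _ _ _ := rfl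
  smul_left _ _ _ := rfl
  definite v hv := by
    refine DFunLike.ext _ _ fun x => ?_
    have h_sq := v.sq_sub_le x x₀
    rw [hv, zero_mul, apply_base, sub_zero] at h_sq
    exact pow_eq_zero_iff two_ne_zero |>.1 (h_sq.antisymm (sq_nonneg _))

noncomputable instance : NormedAddCommGroup (TranslationSpace x₀) :=
  (innerCore x₀).toNormedAddCommGroup

noncomputable instance : InnerProductSpace ℝ (TranslationSpace x₀) :=
  InnerProductSpace.ofCore (innerCore x₀).toCore

theorem inner_eq_apply_translate (v w : TranslationSpace x₀) : ⟪v, w⟫ = v (w.translate x₀) := rfl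

theorem apply_translate (v w : TranslationSpace x₀) (x : X) :
    v (w.translate x) = v x + ⟪v, w⟫ := by
  have h_comm := v.isTranslation_translate.apply_sub_apply_comm w.isTranslation_translate x₀ x
  rw [apply_base, sub_zero, ← inner_eq_apply_translate, real_inner_comm] at h_comm
  linarith

theorem dist_translate_sq (v : TranslationSpace x₀) (x y : X) :
    dist (v.translate x) y ^ 2 = dist x y ^ 2 + 2 * (v x - v y) + ‖v‖ ^ 2 := by
  rw [v.isTranslation_translate x y, apply_translate, real_inner_self_eq_norm_sq]
  ring

theorem isometry_translate_apply (x : X) :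
    Isometry fun v : TranslationSpace x₀ => v.translate x := by
  refine Isometry.of_dist_eq fun v w => ?_
  have h_comp : v.translate x = (v - w).translate (w.translate x) := by
    rw [← Function.comp_apply (f := (v - w).translate), ← translate_add, sub_add_cancel]
  have h_sq := (v - w).dist_translate_sq (w.translate x) (w.translate x)
  rw [← h_comp, dist_self, sub_self, ← dist_eq_norm] at h_sq
  rw [← sq_eq_sq₀ dist_nonneg dist_nonneg, h_sq]
  ring

theorem abs_apply_le (v : TranslationSpace x₀) (x : X) : |v x| ≤ dist x x₀ * ‖v‖ := by
  have h_sq := v.sq_sub_le x x₀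
  rw [apply_base, sub_zero, ← inner_eq_apply_translate, real_inner_self_eq_norm_sq,
    ← mul_pow, mul_comm] at h_sq
  exact abs_le_of_sq_le_sq h_sq (by positivity)

/-- Evaluation of potentials at `x`, as a continuous linear functional. -/
noncomputable def evalCLM (x₀ x : X) : TranslationSpace x₀ →L[ℝ] ℝ :=
  LinearMap.mkContinuous
    { toFun := fun v => v x
      map_add' := fun _ _ => rfl
      map_smul' := fun _ _ => rfl }
    (dist x x₀) fun v => v.abs_apply_le x

@[simp] theorem evalCLM_apply (x : X) (v : TranslationSpace x₀) : evalCLM x₀ x v = v x := rfl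

end TranslationSpace

namespace IsTranslationPotential

variable {f : X → ℝ}

/-- The element of the translation space represented by a potential that need not vanish at the
base point. -/
def toTranslationSpace (hf : IsTranslationPotential f) (x₀ : X) : TranslationSpace x₀ :=
  ⟨fun x => f x - f x₀, sub_self _, fun s => by
    obtain ⟨τ, hτ⟩ := hf s
    refine ⟨τ, ?_⟩
    convert hτ.sub_const (s * f x₀) using 1
    funext x
    exact mul_sub s (f x) (f x₀)⟩

@[simp] theorem toTranslationSpace_apply (hf : IsTranslationPotential f) (x₀ x : X) :
    hf.toTranslationSpace x₀ x = f x - f x₀ := rfl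

theorem translate_toTranslationSpace (hf : IsTranslationPotential f) (x₀ : X) {τ : X → X}
    (hτ : IsTranslation τ f) : (hf.toTranslationSpace x₀).translate = τ :=
  (hf.toTranslationSpace x₀).isTranslation_translate.unique (hτ.sub_const (f x₀))

end IsTranslationPotential

namespace TranslationSpace

open Filter Topology

variable {x₀ : X}

theorem isTranslation_of_tendsto {u : ℕ → TranslationSpace x₀} {τ : X → X} {f : X → ℝ} {c : ℝ}
    (hτ : ∀ x, Tendsto (fun k => (u k).translate x) atTop (𝓝 (τ x)))
    (hf : ∀ x, Tendsto (fun k => u k x) atTop (𝓝 (f x)))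
    (hc : Tendsto (fun k => ‖u k‖) atTop (𝓝 c)) : IsTranslation τ f := by
  refine IsTranslation.of_dist_sq (c := c ^ 2) fun x y => ?_
  have h_lhs := ((hτ x).dist (tendsto_const_nhds (x := y))).pow 2
  have h_rhs := ((((hf x).sub (hf y)).const_mul 2).const_add (dist x y ^ 2)).add (hc.pow 2)
  exact tendsto_nhds_unique h_lhs (h_rhs.congr fun k => ((u k).dist_translate_sq x y).symm)

instance [CompleteSpace X] : CompleteSpace (TranslationSpace x₀) := by
  refine Metric.complete_of_cauchySeq_tendsto fun u hu => ?_
  have h_smul (s : ℝ) : CauchySeq fun k => s • u k :=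
    (uniformContinuous_const_smul s).comp_cauchySeq hu
  choose τ hτ using fun (s : ℝ) (x : X) =>
    cauchySeq_tendsto_of_complete <|
      (isometry_translate_apply x).uniformContinuous.comp_cauchySeq (h_smul s)
  choose f hf using fun x : X =>
    cauchySeq_tendsto_of_complete <| (evalCLM x₀ x).uniformContinuous.comp_cauchySeq hu
  have h_limit (s : ℝ) : IsTranslation (τ s) (s • f) := by
    obtain ⟨c, hc⟩ :=
      cauchySeq_tendsto_of_complete (uniformContinuous_norm.comp_cauchySeq (h_smul s))
    exact isTranslation_of_tendsto (hτ s) (fun x => (hf x).const_mul s) hc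
  have hf_potential : IsTranslationPotential f := fun s => ⟨τ s, h_limit s⟩
  refine ⟨hf_potential.toTranslationSpace x₀, ?_⟩
  have h_one : IsTranslation (τ 1) f := by simpa only [one_smul] using h_limit 1
  rw [(isometry_translate_apply x₀).isEmbedding.tendsto_nhds_iff,
    hf_potential.translate_toTranslationSpace x₀ h_one]
  simpa only [one_smul] using hτ 1 x₀

end TranslationSpace

end Translations

section Actions

open scoped RealInnerProductSpace

variable {X V : Type*} [MetricSpace X] [NormedAddCommGroup V] [InnerProductSpace ℝ V]

/-- The inner product space `V` acts on `X` by translations `τ`, and `r : X → V` is an equivariant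
coordinate whose components are the potentials. -/
structure IsTranslationAction (τ : V → X → X) (r : X → V) : Prop where
  isTranslation : ∀ v, IsTranslation (τ v) fun x => ⟪v, r x⟫
  coord_apply : ∀ v x, r (τ v x) = r x + v

namespace IsTranslationAction

variable {τ : V → X → X} {r : X → V}

theorem dist_apply_sq (h : IsTranslationAction τ r) (v : V) (x y : X) :
    dist (τ v x) y ^ 2 = dist x y ^ 2 + 2 * ⟪v, r x - r y⟫ + ‖v‖ ^ 2 := by
  simp only [h.isTranslation v x y, h.coord_apply, inner_add_right, inner_sub_right,
    real_inner_self_eq_norm_sq]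
  ring

theorem neg_apply_apply (h : IsTranslationAction τ r) (v : V) (x : X) : τ (-v) (τ v x) = x := by
  have h_id : τ (-v) ∘ τ v = id := by
    refine ((h.isTranslation (-v)).comp (h.isTranslation v)).unique ?_
    convert IsTranslation.id using 1
    funext y
    simp
  exact congrFun h_id x

theorem coord_neg_coord_apply (h : IsTranslationAction τ r) (x : X) : r (τ (-r x) x) = 0 := by
  rw [h.coord_apply, add_neg_cancel]

theorem dist_sq_eq_add (h : IsTranslationAction τ r) (x y : X) :
    dist x y ^ 2 = dist (τ (-r x) x) (τ (-r y) y) ^ 2 + dist (r x) (r y) ^ 2 := by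
  rw [h.dist_apply_sq, h.coord_neg_coord_apply, dist_comm x (τ _ _), h.dist_apply_sq, dist_comm y x,
    dist_eq_norm, norm_sub_sq_real]
  simp only [norm_neg, inner_neg_left, inner_sub_right, sub_zero, real_inner_self_eq_norm_sq,
    real_inner_comm (r x) (r y)]
  ring

theorem isTranslationPotential (h : IsTranslationAction τ r) (v : V) :
    IsTranslationPotential fun x => ⟪v, r x⟫ := fun s =>
  ⟨τ (s • v), by
    convert h.isTranslation (s • v) using 1
    funext x
    exact (real_inner_smul_left v (r x) s).symm⟩

/-- The translation space contains every space that acts by translations. -/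
noncomputable def toLinearIsometry (h : IsTranslationAction τ r) (x₀ : X) :
    V →ₗᵢ[ℝ] TranslationSpace x₀ :=
  LinearMap.isometryOfInner
    { toFun := fun v => (h.isTranslationPotential v).toTranslationSpace x₀
      map_add' := fun v w => DFunLike.ext _ _ fun x => by
        simp only [TranslationSpace.add_apply, IsTranslationPotential.toTranslationSpace_apply,
          inner_add_left]
        ring
      map_smul' := fun c v => DFunLike.ext _ _ fun x => by
        simp only [TranslationSpace.smul_apply, IsTranslationPotential.toTranslationSpace_apply,
          real_inner_smul_left, RingHom.id_apply]
        ring }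
    fun v w => by
      rw [TranslationSpace.inner_eq_apply_translate]
      simp only [LinearMap.coe_mk, AddHom.coe_mk]
      rw [(h.isTranslationPotential w).translate_toTranslationSpace x₀ (h.isTranslation w),
        IsTranslationPotential.toTranslationSpace_apply, h.coord_apply, inner_add_right,
        add_sub_cancel_left]

theorem toLinearIsometry_apply (h : IsTranslationAction τ r) (x₀ : X) (v : V) (x : X) :
    h.toLinearIsometry x₀ v x = ⟪v, r x⟫ - ⟪v, r x₀⟫ := rfl

theorem translate_toLinearIsometry (h : IsTranslationAction τ r) (x₀ : X) (v : V) :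
    (h.toLinearIsometry x₀ v).translate = τ v :=
  (h.isTranslationPotential v).translate_toTranslationSpace x₀ (h.isTranslation v)

end IsTranslationAction

namespace TranslationSpace

variable {x₀ : X}

theorem isTranslationAction_of_norm_eq_one (v : TranslationSpace x₀) (hv : ‖v‖ = 1) :
    IsTranslationAction (fun s : ℝ => (s • v).translate) v where
  isTranslation s := by
    convert (s • v).isTranslation_translate using 1
    funext x
    simp [mul_comm]
  coord_apply s x := by
    rw [apply_translate, real_inner_smul_right, real_inner_self_eq_norm_sq, hv, one_pow, mul_one]

/-- The point of the translation space representing evaluation at `x`. -/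
noncomputable def coord [CompleteSpace X] (x₀ x : X) : TranslationSpace x₀ :=
  (InnerProductSpace.toDual ℝ (TranslationSpace x₀)).symm (evalCLM x₀ x)

theorem inner_coord [CompleteSpace X] (v : TranslationSpace x₀) (x : X) :
    ⟪v, coord x₀ x⟫ = v x := by
  rw [real_inner_comm, coord, InnerProductSpace.toDual_symm_apply, evalCLM_apply]

theorem isTranslationAction_translate [CompleteSpace X] (x₀ : X) :
    IsTranslationAction (translate (x₀ := x₀)) (coord x₀) where
  isTranslation v := by simpa only [inner_coord] using v.isTranslation_translate
  coord_apply v x := ext_inner_left ℝ fun w => by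
    rw [inner_add_right, inner_coord, inner_coord, apply_translate]

end TranslationSpace

end Actions

namespace IsL2Prod

variable {X Y Z Y' Z' : Type} [MetricSpace X] [MetricSpace Y] [MetricSpace Z] [MetricSpace Y']
  [MetricSpace Z'] {Φ : X → Y × Z} {Φ' : X → Y' × Z'}

/-- The bijection underlying an ℓ²-product decomposition. -/
noncomputable def equiv (hΦ : IsL2Prod Φ) : X ≃ Y × Z := Equiv.ofBijective Φ hΦ.1

theorem apply_equiv_symm (hΦ : IsL2Prod Φ) (q : Y × Z) : Φ (hΦ.equiv.symm q) = q :=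
  hΦ.equiv.apply_symm_apply q

theorem equiv_apply (hΦ : IsL2Prod Φ) (p : X) : hΦ.equiv p = Φ p := rfl

theorem equiv_symm_apply (hΦ : IsL2Prod Φ) (p : X) : hΦ.equiv.symm (Φ p) = p :=
  hΦ.equiv.symm_apply_apply p

theorem of_dist_sq (h_surj : Function.Surjective Φ)
    (h_dist : ∀ p q, dist p q ^ 2 = dist (Φ p).1 (Φ q).1 ^ 2 + dist (Φ p).2 (Φ q).2 ^ 2) :
    IsL2Prod Φ := by
  refine ⟨⟨fun p q hpq => ?_, h_surj⟩, h_dist⟩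
  have h_zero := h_dist p q
  simpa [hpq] using h_zero

theorem swap (hΦ : IsL2Prod Φ) : IsL2Prod (Prod.swap ∘ Φ) :=
  ⟨Prod.swap_bijective.comp hΦ.1, fun p q => (hΦ.2 p q).trans (add_comm _ _)⟩

theorem dist_fst_eq (hΦ : IsL2Prod Φ) {p q : X} (h : (Φ p).2 = (Φ q).2) :
    dist (Φ p).1 (Φ q).1 = dist p q := by
  rw [← sq_eq_sq₀ dist_nonneg dist_nonneg, hΦ.2 p q, h, dist_self]
  ring

theorem isometry_slice (hΦ : IsL2Prod Φ) (z : Z) : Isometry fun y => hΦ.equiv.symm (y, z) :=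
  Isometry.of_dist_eq fun y y' => by
    rw [← hΦ.dist_fst_eq (by simp only [hΦ.apply_equiv_symm]), hΦ.apply_equiv_symm,
      hΦ.apply_equiv_symm]

theorem exists_isometryEquiv_fst [Nonempty X] (hΦ : IsL2Prod Φ) (hΦ' : IsL2Prod Φ')
    (h_fst : ∀ p q, (Φ p).1 = (Φ q).1 ↔ (Φ' p).1 = (Φ' q).1)
    (h_snd : ∀ p q, (Φ p).2 = (Φ q).2 ↔ (Φ' p).2 = (Φ' q).2) :
    ∃ g : Y ≃ᵢ Y', ∀ p, (Φ' p).1 = g (Φ p).1 := by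
  obtain ⟨p₀⟩ := ‹Nonempty X›
  let g (y : Y) : Y' := (Φ' (hΦ.equiv.symm (y, (Φ p₀).2))).1
  have hg (p : X) : g (Φ p).1 = (Φ' p).1 := (h_fst _ _).1 (by rw [hΦ.apply_equiv_symm])
  have hg_isometry : Isometry g := Isometry.of_dist_eq fun y y' => by
    rw [← (hΦ.isometry_slice (Φ p₀).2).dist_eq y y']
    exact hΦ'.dist_fst_eq ((h_snd _ _).1 (by simp only [hΦ.apply_equiv_symm]))
  have hg_surj : Function.Surjective g := fun y =>
    ⟨(Φ (hΦ'.equiv.symm (y, (Φ' p₀).2))).1, by rw [hg, hΦ'.apply_equiv_symm]⟩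
  exact ⟨⟨Equiv.ofBijective g ⟨hg_isometry.injective, hg_surj⟩, hg_isometry⟩, fun p => (hg p).symm⟩

theorem exists_isometryEquiv_prod [Nonempty X] (hΦ : IsL2Prod Φ) (hΦ' : IsL2Prod Φ')
    (h_fst : ∀ p q, (Φ p).1 = (Φ q).1 ↔ (Φ' p).1 = (Φ' q).1)
    (h_snd : ∀ p q, (Φ p).2 = (Φ q).2 ↔ (Φ' p).2 = (Φ' q).2) :
    ∃ (g : Y ≃ᵢ Y') (k : Z ≃ᵢ Z'), ∀ p, Φ' p = (g (Φ p).1, k (Φ p).2) := by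
  obtain ⟨g, hg⟩ := hΦ.exists_isometryEquiv_fst hΦ' h_fst h_snd
  obtain ⟨k, hk⟩ := hΦ.swap.exists_isometryEquiv_fst hΦ'.swap h_snd h_fst
  exact ⟨g, k, fun p => Prod.ext (hg p) (hk p)⟩

theorem isTranslationPotential_comp_fst (hΦ : IsL2Prod Φ) {f : Y → ℝ}
    (hf : IsTranslationPotential f) : IsTranslationPotential fun p => f (Φ p).1 := by
  intro s
  obtain ⟨τ, hτ⟩ := hf s
  refine ⟨fun p => hΦ.equiv.symm (τ (Φ p).1, (Φ p).2), fun p q => ?_⟩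
  have h_fst := hτ (Φ p).1 (Φ q).1
  simp only [Pi.smul_apply, smul_eq_mul] at h_fst ⊢
  rw [hΦ.2, hΦ.2 p q, hΦ.apply_equiv_symm, h_fst]
  ring

theorem isTranslation_slice (hΦ : IsL2Prod Φ) {τ : X → X} {f : X → ℝ} (hτ : IsTranslation τ f)
    (h_snd : ∀ p, (Φ (τ p)).2 = (Φ p).2) (z : Z) :
    IsTranslation (fun y => (Φ (τ (hΦ.equiv.symm (y, z)))).1)
      (fun y => f (hΦ.equiv.symm (y, z))) := by
  intro y y'
  have h_lift :
      hΦ.equiv.symm ((Φ (τ (hΦ.equiv.symm (y, z)))).1, z) = τ (hΦ.equiv.symm (y, z)) := by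
    rw [Equiv.symm_apply_eq]
    exact Prod.ext rfl (by rw [equiv_apply, h_snd, hΦ.apply_equiv_symm])
  rw [← (hΦ.isometry_slice z).dist_eq, ← (hΦ.isometry_slice z).dist_eq y, h_lift]
  simpa only [h_lift] using hτ (hΦ.equiv.symm (y, z)) (hΦ.equiv.symm (y', z))

end IsL2Prod

section Splitting

variable {X V Z : Type} [MetricSpace X] [MetricSpace Z] [NormedAddCommGroup V]
  [InnerProductSpace ℝ V]

/-- The decomposition of `X` into the zero set of the coordinate and the space acting. -/
def IsTranslationAction.split {τ : V → X → X} {r : X → V} (h : IsTranslationAction τ r) (x : X) :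
    {x : X // r x = 0} × V :=
  (⟨τ (-r x) x, h.coord_neg_coord_apply x⟩, r x)

theorem IsTranslationAction.isL2Prod_split {τ : V → X → X} {r : X → V}
    (h : IsTranslationAction τ r) : IsL2Prod h.split := by
  refine IsL2Prod.of_dist_sq ?_ h.dist_sq_eq_add
  rintro ⟨⟨y, hy⟩, v⟩
  have h_coord : r (τ v y) = v := by rw [h.coord_apply, hy, zero_add]
  refine ⟨τ v y, Prod.ext (Subtype.ext ?_) h_coord⟩
  simp only [split, h_coord, h.neg_apply_apply]

theorem IsL2Prod.isTranslationAction {Y : Type} [MetricSpace Y] {Φ : X → Y × V}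
    (hΦ : IsL2Prod Φ) :
    IsTranslationAction (fun v p => hΦ.equiv.symm ((Φ p).1, (Φ p).2 + v)) (fun p => (Φ p).2) where
  isTranslation v := by
    refine IsTranslation.of_dist_sq (c := ‖v‖ ^ 2) fun p q => ?_
    rw [hΦ.2, hΦ.2 p q, hΦ.apply_equiv_symm, dist_eq_norm (_ + _), dist_eq_norm (Φ p).2,
      add_sub_right_comm, norm_add_sq_real, real_inner_comm, inner_sub_right]
    ring
  coord_apply v p := by rw [hΦ.apply_equiv_symm]

theorem IsL2Prod.isSplittingLine_preimage {Φ : X → ℝ × Z} (hΦ : IsL2Prod Φ) (z : Z) :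
    IsSplittingLine (Φ ⁻¹' (Set.univ ×ˢ {z})) := by
  refine ⟨⟨_, hΦ.isometry_slice z, ?_⟩, Z, _, Φ, z, hΦ, Set.image_preimage_eq _ hΦ.1.2⟩
  ext p
  constructor
  · rintro ⟨t, rfl⟩
    simp [hΦ.apply_equiv_symm]
  · rintro ⟨-, hp : (Φ p).2 = z⟩
    exact ⟨(Φ p).1, by simp only [← hp, hΦ.equiv_symm_apply]⟩

theorem IsTranslationPotential.exists_isSplittingLine {f : X → ℝ}
    (hf : IsTranslationPotential f) {x y : X} (hxy : f x ≠ f y) :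
    ∃ ℓ : Set X, IsSplittingLine ℓ := by
  let v := hf.toTranslationSpace x
  have hv : v ≠ 0 := fun h_zero => hxy.symm (sub_eq_zero.1 (DFunLike.congr_fun h_zero y))
  have h_action := (‖v‖⁻¹ • v).isTranslationAction_of_norm_eq_one (norm_smul_inv_norm (𝕜 := ℝ) hv)
  exact ⟨_, h_action.isL2Prod_split.swap.isSplittingLine_preimage (h_action.split x).1⟩

theorem forall_not_isSplittingLine_iff :
    (∀ ℓ : Set X, ¬ IsSplittingLine ℓ) ↔
      ∀ f : X → ℝ, IsTranslationPotential f → ∀ x y, f x = f y := by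
  constructor
  · intro h f hf x y
    by_contra hxy
    exact not_exists.2 h (hf.exists_isSplittingLine hxy)
  · rintro h ℓ ⟨-, Z, _, Φ, z, hΦ, -⟩
    have h_const := h _ (hΦ.swap.isTranslationAction.isTranslationPotential 1)
      (hΦ.equiv.symm (0, z)) (hΦ.equiv.symm (1, z))
    simp [hΦ.apply_equiv_symm] at h_const

theorem TranslationSpace.not_isSplittingLine_coord_eq_zero [CompleteSpace X] (x₀ : X)
    (ℓ : Set {x : X // coord x₀ x = 0}) : ¬ IsSplittingLine ℓ := by
  refine forall_not_isSplittingLine_iff.2 (fun f hf y y' => ?_) ℓ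
  have hΦ := (isTranslationAction_translate x₀).isL2Prod_split
  let v := (hΦ.isTranslationPotential_comp_fst hf).toTranslationSpace x₀
  have hv (y : {x : X // coord x₀ x = 0}) : v y = 0 := by rw [← inner_coord, y.2, inner_zero_right]
  have h_fst (y : {x : X // coord x₀ x = 0}) :
      ((isTranslationAction_translate x₀).split y).1 = y :=
    Subtype.ext (by simp [IsTranslationAction.split, y.2, translate_zero])
  have h_vals : v y = v y' := (hv y).trans (hv y').symm
  simpa [v, h_fst] using h_vals

end Splitting

namespace IsL2Prod

open scoped RealInnerProductSpace

variable {X Y H : Type} [MetricSpace X] [MetricSpace Y] [NormedAddCommGroup H]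
  [InnerProductSpace ℝ H] {Φ : X → Y × H}

theorem snd_translate_eq_of_mem_orthogonal (hΦ : IsL2Prod Φ) {x₀ : X} {w : TranslationSpace x₀}
    (hw : w ∈ (hΦ.isTranslationAction.toLinearIsometry x₀).rangeᗮ) (p : X) :
    (Φ (w.translate p)).2 = (Φ p).2 := by
  refine ext_inner_left ℝ fun b => ?_
  have h_orth : ⟪hΦ.isTranslationAction.toLinearIsometry x₀ b, w⟫ = 0 :=
    Submodule.inner_right_of_mem_orthogonal (LinearMap.mem_range_self _ b) hw
  have h_apply := (hΦ.isTranslationAction.toLinearIsometry x₀ b).apply_translate w p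
  rw [h_orth, IsTranslationAction.toLinearIsometry_apply,
    IsTranslationAction.toLinearIsometry_apply] at h_apply
  linarith

theorem eq_zero_of_mem_orthogonal (hΦ : IsL2Prod Φ) (hY : ∀ ℓ : Set Y, ¬ IsSplittingLine ℓ)
    {x₀ : X} {w : TranslationSpace x₀}
    (hw : w ∈ (hΦ.isTranslationAction.toLinearIsometry x₀).rangeᗮ) : w = 0 := by
  have h_slice : IsTranslationPotential fun y => w (hΦ.equiv.symm (y, (Φ x₀).2)) := fun s =>
    ⟨_, hΦ.isTranslation_slice (s • w).isTranslation_translate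
      (hΦ.snd_translate_eq_of_mem_orthogonal (Submodule.smul_mem _ s hw)) (Φ x₀).2⟩
  have h_lift : hΦ.equiv.symm ((Φ (w.translate x₀)).1, (Φ x₀).2) = w.translate x₀ := by
    rw [← hΦ.snd_translate_eq_of_mem_orthogonal hw x₀]
    exact hΦ.equiv_symm_apply _
  have h_const := forall_not_isSplittingLine_iff.1 hY _ h_slice (Φ (w.translate x₀)).1 (Φ x₀).1
  rw [h_lift, Prod.mk.eta, hΦ.equiv_symm_apply, w.apply_translate, add_eq_left] at h_const
  exact inner_self_eq_zero.1 h_const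

theorem surjective_toLinearIsometry [CompleteSpace H] (hΦ : IsL2Prod Φ)
    (hY : ∀ ℓ : Set Y, ¬ IsSplittingLine ℓ) (x₀ : X) :
    Function.Surjective (hΦ.isTranslationAction.toLinearIsometry x₀) := by
  have : CompleteSpace (hΦ.isTranslationAction.toLinearIsometry x₀).range :=
    (hΦ.isTranslationAction.toLinearIsometry x₀).isometry.isUniformInducing.isComplete_range
      |>.completeSpace_coe
  refine LinearMap.range_eq_top.1 (Submodule.orthogonal_eq_bot_iff.1 ?_)
  exact (Submodule.eq_bot_iff _).2 fun w hw => hΦ.eq_zero_of_mem_orthogonal hY hw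

theorem fst_eq_iff [CompleteSpace H] (hΦ : IsL2Prod Φ) (hY : ∀ ℓ : Set Y, ¬ IsSplittingLine ℓ)
    (x₀ p q : X) : (Φ p).1 = (Φ q).1 ↔ ∃ v : TranslationSpace x₀, v.translate p = q := by
  rw [(hΦ.surjective_toLinearIsometry hY x₀).exists]
  simp only [IsTranslationAction.translate_toLinearIsometry, Equiv.symm_apply_eq]
  constructor
  · intro h
    exact ⟨(Φ q).2 - (Φ p).2, by rw [h, add_sub_cancel, equiv_apply]⟩
  · rintro ⟨v, hv⟩
    exact (Prod.ext_iff.1 hv).1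

theorem snd_eq_iff [CompleteSpace H] (hΦ : IsL2Prod Φ) (hY : ∀ ℓ : Set Y, ¬ IsSplittingLine ℓ)
    (x₀ p q : X) : (Φ p).2 = (Φ q).2 ↔ ∀ v : TranslationSpace x₀, v p = v q := by
  rw [(hΦ.surjective_toLinearIsometry hY x₀).forall]
  simp only [IsTranslationAction.toLinearIsometry_apply, sub_left_inj]
  exact ⟨fun h v => by rw [h], ext_inner_left ℝ⟩

end IsL2Prod

/-- Main theorem: every (nonempty) complete metric space splits as an
ℓ²-product `Y × H` with `H` a real Hilbert space and `Y` without splitting lines,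
uniquely up to isometries of the factors compatible with the decompositions. -/
theorem hilbert_factor_decomposition {X : Type} [MetricSpace X] [CompleteSpace X]
    [Nonempty X] :
    ∃ (Y H : Type) (_ : MetricSpace Y) (_ : NormedAddCommGroup H)
      (_ : InnerProductSpace ℝ H) (_ : CompleteSpace H) (Φ : X → Y × H),
      IsL2Prod Φ ∧ (∀ ℓ : Set Y, ¬ IsSplittingLine ℓ) ∧
      ∀ (Y' H' : Type) (_ : MetricSpace Y') (_ : NormedAddCommGroup H')
        (_ : InnerProductSpace ℝ H') (_ : CompleteSpace H') (Φ' : X → Y' × H'),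
        IsL2Prod Φ' → (∀ ℓ : Set Y', ¬ IsSplittingLine ℓ) →
        ∃ (g : Y ≃ᵢ Y') (h : H ≃ᵢ H'),
          ∀ p : X, Φ' p = (g (Φ p).1, h (Φ p).2) := by
  obtain ⟨x₀⟩ := ‹Nonempty X›
  have hΦ := (TranslationSpace.isTranslationAction_translate x₀).isL2Prod_split
  have hY := TranslationSpace.not_isSplittingLine_coord_eq_zero x₀
  refine ⟨_, _, inferInstance, inferInstance, inferInstance, inferInstance, _, hΦ, hY, ?_⟩
  intro Y' H' _ _ _ _ Φ' hΦ' hY'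
  exact hΦ.exists_isometryEquiv_prod hΦ'
    (fun p q => (hΦ.fst_eq_iff hY x₀ p q).trans (hΦ'.fst_eq_iff hY' x₀ p q).symm)
    (fun p q => (hΦ.snd_eq_iff hY x₀ p q).trans (hΦ'.snd_eq_iff hY' x₀ p q).symm)
end

section
/- Let X be a complete metric space with decomposition X = Y × H where H is a Hilbert space and Y has no splitting lines. Then the isometry group of X is canonically isomorphic to Iso(Y) × Iso(H): every isometry of X preserves the product structure, i.e., has the form (g, h) with g ∈ Iso(Y), h ∈ Iso(H). -/
/-
The translations of `X = Y × H` along a vector of `H` form a flow whose squared distances are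
quadratic polynomials in time. In a second decomposition `X = Y' × H'` the orbits of such a flow
project to straight lines in `H'` at bounded distance from one another, hence with a common
direction vector `w`. Subtracting the motion `w` from the flow leaves a flow of the same kind on
`Y'`. If it moved points, its orbits would be splitting lines of `Y'`; so it is constant, and the
`H`-fibers lie in the `H'`-fibers. By symmetry the two families of fibers agree, and the distance
between two fibers determines the metric of the other factor.
-/

theorem eq_zero_of_forall_norm_add_smul_le {E : Type*} [NormedAddCommGroup E] [NormedSpace ℝ E]
    {a w : E} {C : ℝ} (h : ∀ t : ℝ, ‖a + t • w‖ ≤ C) : w = 0 := by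
  by_contra hw
  have hw_pos : 0 < ‖w‖ := norm_pos_iff.2 hw
  have hsmul : ∀ t : ℝ, |t| * ‖w‖ ≤ C + ‖a‖ := fun t => by
    calc |t| * ‖w‖ = ‖(a + t • w) - a‖ := by rw [add_sub_cancel_left, norm_smul, Real.norm_eq_abs]
      _ ≤ ‖a + t • w‖ + ‖a‖ := norm_sub_le _ _
      _ ≤ C + ‖a‖ := by gcongr; exact h t
  have hlarge := (mul_le_mul_of_nonneg_right (le_abs_self _) hw_pos.le).trans
    (hsmul ((C + ‖a‖ + 1) / ‖w‖))
  rw [div_mul_cancel₀ _ hw_pos.ne'] at hlarge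
  linarith

theorem dist_add_smul_add_smul_sq {H : Type*} [NormedAddCommGroup H] [InnerProductSpace ℝ H]
    (x y v : H) (s t : ℝ) :
    dist (x + s • v) (y + t • v) ^ 2
      = dist x y ^ 2 + 2 * (s - t) * (inner ℝ v x - inner ℝ v y) + ‖v‖ ^ 2 * (s - t) ^ 2 := by
  rw [dist_eq_norm, dist_eq_norm, add_sub_add_comm, ← sub_smul, norm_add_sq_real, norm_smul,
    mul_pow, Real.norm_eq_abs, sq_abs, inner_smul_right, real_inner_comm, inner_sub_right]
  ring

theorem exists_isometryEquiv_of_dist_eq {X : Type*} {Y Y' : Type*} [MetricSpace Y]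
    [MetricSpace Y'] {f : X → Y} {f' : X → Y'} (hf : Function.Surjective f)
    (hf' : Function.Surjective f') (h : ∀ p q, dist (f p) (f q) = dist (f' p) (f' q)) :
    ∃ g : Y ≃ᵢ Y', ∀ p, g (f p) = f' p := by
  let g : Y → Y' := fun y => f' (Function.surjInv hf y)
  have hg : Isometry g := Isometry.of_dist_eq fun y z => by
    rw [← h, Function.surjInv_eq hf, Function.surjInv_eq hf]
  have hgf : ∀ p, g (f p) = f' p := fun p => by
    rw [← dist_eq_zero, ← h, Function.surjInv_eq hf, dist_self]
  have hg_surj : Function.Surjective g := fun y' =>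
    let ⟨p, hp⟩ := hf' y'
    ⟨f p, (hgf p).trans hp⟩
  exact ⟨⟨Equiv.ofBijective g ⟨hg.injective, hg_surj⟩, hg⟩, hgf⟩

namespace IsL2Prod

section MetricFactors

variable {X Y Z : Type} [MetricSpace X] [MetricSpace Y] [MetricSpace Z] {Φ : X → Y × Z}

theorem comp_isometryEquiv {X' : Type} [MetricSpace X'] (hΦ : IsL2Prod Φ) (F : X' ≃ᵢ X) :
    IsL2Prod (Φ ∘ F) :=
  ⟨hΦ.1.comp F.bijective, fun p q => by rw [← F.dist_eq, hΦ.2]; rfl⟩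

theorem surjective_fst [Nonempty X] (hΦ : IsL2Prod Φ) : Function.Surjective fun p => (Φ p).1 :=
  have : Nonempty Z := ‹Nonempty X›.map fun p => (Φ p).2
  Prod.fst_surjective.comp hΦ.1.surjective

theorem surjective_snd [Nonempty X] (hΦ : IsL2Prod Φ) : Function.Surjective fun p => (Φ p).2 :=
  have : Nonempty Y := ‹Nonempty X›.map fun p => (Φ p).1
  Prod.snd_surjective.comp hΦ.1.surjective

theorem dist_fst_le (hΦ : IsL2Prod Φ) (p q : X) : dist (Φ p).1 (Φ q).1 ≤ dist p q :=
  (sq_le_sq₀ dist_nonneg dist_nonneg).1 <| by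
    rw [hΦ.2 p q]
    exact le_add_of_nonneg_right (sq_nonneg _)

theorem dist_snd_le (hΦ : IsL2Prod Φ) (p q : X) : dist (Φ p).2 (Φ q).2 ≤ dist p q :=
  (sq_le_sq₀ dist_nonneg dist_nonneg).1 <| by
    rw [hΦ.2 p q]
    exact le_add_of_nonneg_left (sq_nonneg _)

theorem dist_snd_eq_half (hΦ : IsL2Prod Φ) {p q s : X} (hpq : dist p q = dist p s / 2)
    (hqs : dist q s = dist p s / 2) :
    dist (Φ p).2 (Φ q).2 = dist (Φ p).2 (Φ s).2 / 2 ∧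
      dist (Φ q).2 (Φ s).2 = dist (Φ p).2 (Φ s).2 / 2 := by
  have hpq' := hΦ.2 p q
  have hqs' := hΦ.2 q s
  have hps' := hΦ.2 p s
  rw [hpq] at hpq'
  rw [hqs] at hqs'
  have hfst : dist (Φ p).1 (Φ s).1 ^ 2 ≤ (dist (Φ p).1 (Φ q).1 + dist (Φ q).1 (Φ s).1) ^ 2 :=
    pow_le_pow_left₀ dist_nonneg (dist_triangle _ _ _) 2
  have hsnd : dist (Φ p).2 (Φ s).2 ^ 2 ≤ (dist (Φ p).2 (Φ q).2 + dist (Φ q).2 (Φ s).2) ^ 2 :=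
    pow_le_pow_left₀ dist_nonneg (dist_triangle _ _ _) 2
  have heq : dist (Φ p).2 (Φ q).2 = dist (Φ q).2 (Φ s).2 := by
    rw [← sub_eq_zero, ← sq_eq_zero_iff]
    refine le_antisymm ?_ (sq_nonneg _)
    linarith [sq_nonneg (dist (Φ p).1 (Φ q).1 - dist (Φ q).1 (Φ s).1)]
  have hdouble : dist (Φ p).2 (Φ s).2 = dist (Φ p).2 (Φ q).2 + dist (Φ q).2 (Φ s).2 := by
    refine (sq_eq_sq₀ dist_nonneg (add_nonneg dist_nonneg dist_nonneg)).1 (le_antisymm hsnd ?_)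
    linarith [sq_nonneg (dist (Φ p).1 (Φ q).1 - dist (Φ q).1 (Φ s).1),
      sq_nonneg (dist (Φ p).2 (Φ q).2 - dist (Φ q).2 (Φ s).2)]
  constructor <;> linarith

variable {Y' Z' : Type} [MetricSpace Y'] [MetricSpace Z'] {Ψ : X → Y' × Z'}

theorem dist_fst_le_of_fst_eq_imp (hΦ : IsL2Prod Φ) (hΨ : IsL2Prod Ψ)
    (h : ∀ p q, (Φ p).1 = (Φ q).1 → (Ψ p).1 = (Ψ q).1) (p q : X) :
    dist (Ψ p).1 (Ψ q).1 ≤ dist (Φ p).1 (Φ q).1 := by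
  obtain ⟨r, hr⟩ := hΦ.1.surjective ((Φ q).1, (Φ p).2)
  have hpr : dist p r = dist (Φ p).1 (Φ q).1 :=
    (sq_eq_sq₀ dist_nonneg dist_nonneg).1 <| by rw [hΦ.2, hr, dist_self]; ring
  calc dist (Ψ p).1 (Ψ q).1 = dist (Ψ p).1 (Ψ r).1 := by rw [h r q (by rw [hr])]
    _ ≤ dist p r := hΨ.dist_fst_le p r
    _ = dist (Φ p).1 (Φ q).1 := hpr

theorem exists_isometryEquiv_of_fst_eq_iff [Nonempty X] (hΦ : IsL2Prod Φ) (hΨ : IsL2Prod Ψ)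
    (h : ∀ p q, (Φ p).1 = (Φ q).1 ↔ (Ψ p).1 = (Ψ q).1) :
    ∃ (g : Y ≃ᵢ Y') (k : Z ≃ᵢ Z'), ∀ p, Ψ p = (g (Φ p).1, k (Φ p).2) := by
  have hfst : ∀ p q, dist (Φ p).1 (Φ q).1 = dist (Ψ p).1 (Ψ q).1 := fun p q =>
    le_antisymm (hΨ.dist_fst_le_of_fst_eq_imp hΦ (fun p q => (h p q).2) p q)
      (hΦ.dist_fst_le_of_fst_eq_imp hΨ (fun p q => (h p q).1) p q)
  have hsnd : ∀ p q, dist (Φ p).2 (Φ q).2 = dist (Ψ p).2 (Ψ q).2 := fun p q => by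
    have hpyth := (hΦ.2 p q).symm.trans (hΨ.2 p q)
    rw [hfst] at hpyth
    exact (sq_eq_sq₀ dist_nonneg dist_nonneg).1 (add_left_cancel hpyth)
  obtain ⟨g, hg⟩ := exists_isometryEquiv_of_dist_eq hΦ.surjective_fst hΨ.surjective_fst hfst
  obtain ⟨k, hk⟩ := exists_isometryEquiv_of_dist_eq hΦ.surjective_snd hΨ.surjective_snd hsnd
  exact ⟨g, k, fun p => Prod.ext (hg p).symm (hk p).symm⟩

end MetricFactors

theorem snd_eq_midpoint {X Y E : Type} [MetricSpace X] [MetricSpace Y] [NormedAddCommGroup E]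
    [NormedSpace ℝ E] [StrictConvexSpace ℝ E] {Φ : X → Y × E} (hΦ : IsL2Prod Φ) {p q s : X}
    (hpq : dist p q = dist p s / 2) (hqs : dist q s = dist p s / 2) :
    (Φ q).2 = midpoint ℝ (Φ p).2 (Φ s).2 :=
  have hhalf := hΦ.dist_snd_eq_half hpq hqs
  eq_midpoint_of_dist_eq_half hhalf.1 hhalf.2

end IsL2Prod

/-- `B` is a flow on `X` that behaves metrically like the translations of a product `ℝ × Z` along
its first factor, with `κ` the square of the speed. The height `ρ` plays the role of the
`ℝ`-coordinate multiplied by the speed. -/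
structure IsTranslationFlow {X : Type*} [MetricSpace X] (B : ℝ → X → X) (ρ : X → ℝ) (κ : ℝ) :
    Prop where
  map_zero : ∀ p, B 0 p = p
  map_add : ∀ s t p, B (s + t) p = B s (B t p)
  dist_sq : ∀ s t p q,
    dist (B s p) (B t q) ^ 2 = dist p q ^ 2 + 2 * (s - t) * (ρ p - ρ q) + κ * (s - t) ^ 2

namespace IsTranslationFlow

section Basic

variable {X : Type*} [MetricSpace X] {B : ℝ → X → X} {ρ : X → ℝ} {κ : ℝ}

theorem dist_map_map (hB : IsTranslationFlow B ρ κ) (t : ℝ) (p q : X) :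
    dist (B t p) (B t q) = dist p q :=
  (sq_eq_sq₀ dist_nonneg dist_nonneg).1 <| by rw [hB.dist_sq]; ring

theorem dist_orbit (hB : IsTranslationFlow B ρ κ) (p : X) (s t : ℝ) :
    dist (B s p) (B t p) = √κ * dist s t := by
  rw [← Real.sqrt_sq (dist_nonneg (x := B s p)), hB.dist_sq, dist_self, sub_self, Real.dist_eq,
    ← Real.sqrt_sq_eq_abs, ← Real.sqrt_mul' _ (sq_nonneg _)]
  congr 1
  ring

/-- Computing `dist (B (1 + t) p) p` in one step and in two steps determines the height. -/
theorem height_map (hB : IsTranslationFlow B ρ κ) (t : ℝ) (p : X) :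
    ρ (B t p) = ρ p + κ * t := by
  have hone := hB.dist_sq (1 + t) 0 p p
  have htwo := hB.dist_sq 1 0 (B t p) p
  have horbit := hB.dist_sq t 0 p p
  rw [hB.map_add] at hone
  simp only [hB.map_zero, dist_self] at hone htwo horbit
  linarith

theorem rescale (hB : IsTranslationFlow B ρ κ) (a : ℝ) :
    IsTranslationFlow (fun t => B (a * t)) (fun p => a * ρ p) (a ^ 2 * κ) where
  map_zero p := by rw [mul_zero, hB.map_zero]
  map_add s t p := by rw [mul_add, hB.map_add]
  dist_sq s t p q := by rw [hB.dist_sq]; ring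

end Basic

section Splitting

variable {Y : Type} [MetricSpace Y] {B : ℝ → Y → Y} {ρ : Y → ℝ}

/-- The decomposition `Y ≅ ℝ × Z` induced by a unit-speed translation flow, where `Z` is the zero
level of the height and the second coordinate of `y` is where the orbit of `y` meets `Z`. -/
def splitting (hB : IsTranslationFlow B ρ 1) (y : Y) : ℝ × {z : Y // ρ z = 0} :=
  (ρ y, ⟨B (-ρ y) y, by rw [hB.height_map]; ring⟩)

theorem splitting_map (hB : IsTranslationFlow B ρ 1) (t : ℝ) (y : Y) :
    hB.splitting (B t y) = (ρ y + t, (hB.splitting y).2) := by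
  have hheight : ρ (B t y) = ρ y + t := by rw [hB.height_map, one_mul]
  refine Prod.ext hheight (Subtype.ext ?_)
  change B (-ρ (B t y)) (B t y) = B (-ρ y) y
  rw [← hB.map_add, hheight, neg_add, neg_add_cancel_right]

theorem splitting_of_height_eq_zero (hB : IsTranslationFlow B ρ 1) {z : Y} (hz : ρ z = 0) :
    hB.splitting z = (0, ⟨z, hz⟩) := by
  refine Prod.ext hz (Subtype.ext ?_)
  change B (-ρ z) z = z
  rw [hz, neg_zero, hB.map_zero]

theorem isL2Prod_splitting (hB : IsTranslationFlow B ρ 1) : IsL2Prod hB.splitting := by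
  have hdist : ∀ p q, dist p q ^ 2 = dist (hB.splitting p).1 (hB.splitting q).1 ^ 2
      + dist (hB.splitting p).2 (hB.splitting q).2 ^ 2 := fun p q => by
    simp only [splitting, Subtype.dist_eq, hB.dist_sq, Real.dist_eq, sq_abs]
    ring
  refine ⟨⟨fun p q hpq => ?_, fun ⟨t, z, hz⟩ => ⟨B t z, ?_⟩⟩, hdist⟩
  · rw [← dist_eq_zero, ← sq_eq_zero_iff, hdist, hpq, dist_self, dist_self]
    ring
  · rw [hB.splitting_map, hB.splitting_of_height_eq_zero hz, hz, zero_add]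

theorem isSplittingLine_orbit (hB : IsTranslationFlow B ρ 1) (y : Y) :
    IsSplittingLine (Set.range fun t => B t y) := by
  have hline : Isometry fun t => B t y := Isometry.of_dist_eq fun s t => by
    rw [hB.dist_orbit, Real.sqrt_one, one_mul]
  refine ⟨⟨_, hline, rfl⟩, _, inferInstance, hB.splitting, (hB.splitting y).2,
    hB.isL2Prod_splitting, ?_⟩
  ext ⟨t, z⟩
  simp only [Set.mem_image, Set.exists_range_iff, hB.splitting_map, Prod.mk.injEq, Set.mem_prod,
    Set.mem_univ, true_and, Set.mem_singleton_iff]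
  exact ⟨fun ⟨_, _, hz⟩ => hz.symm, fun hz => ⟨t - ρ y, add_sub_cancel _ _, hz.symm⟩⟩

theorem exists_isSplittingLine [Nonempty Y] {κ : ℝ} (hB : IsTranslationFlow B ρ κ)
    (hκ : 0 < κ) : ∃ ℓ : Set Y, IsSplittingLine ℓ := by
  have hunit := hB.rescale (√κ)⁻¹
  rw [inv_pow, Real.sq_sqrt hκ.le, inv_mul_cancel₀ hκ.ne'] at hunit
  exact ⟨_, hunit.isSplittingLine_orbit (Classical.arbitrary Y)⟩

end Splitting

section StrictConvexFactor

variable {X Y E : Type} [MetricSpace X] [MetricSpace Y] [NormedAddCommGroup E] [NormedSpace ℝ E]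
  [StrictConvexSpace ℝ E] {Φ : X → Y × E} {B : ℝ → X → X} {ρ : X → ℝ} {κ : ℝ}

theorem exists_snd_orbit_eq (hB : IsTranslationFlow B ρ κ) (hΦ : IsL2Prod Φ) (p : X) :
    ∃ w : E, ∀ t, (Φ (B t p)).2 = (Φ p).2 + t • w := by
  have hmidpoint : ∀ s t, (Φ (B (midpoint ℝ s t) p)).2
      = midpoint ℝ (Φ (B s p)).2 (Φ (B t p)).2 := fun s t => by
    apply hΦ.snd_eq_midpoint <;> simp only [hB.dist_orbit, dist_left_midpoint, dist_midpoint_right,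
      Real.norm_ofNat] <;> ring
  have hcont : Continuous fun t => (Φ (B t p)).2 :=
    (LipschitzWith.of_dist_le' fun s t =>
      (hΦ.dist_snd_le _ _).trans_eq (hB.dist_orbit p s t)).continuous
  let orbit : ℝ →ᵃ[ℝ] E := .ofMapMidpoint _ hmidpoint hcont
  refine ⟨orbit.linear 1, fun t => ?_⟩
  calc orbit t = orbit.linear t + orbit 0 := congrFun orbit.decomp t
    _ = (Φ p).2 + t • orbit.linear 1 := by
      rw [← map_smul, smul_eq_mul, mul_one, add_comm]
      exact congrArg (fun q => (Φ q).2 + orbit.linear t) (hB.map_zero p)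

theorem exists_snd_map_eq [Nonempty X] (hB : IsTranslationFlow B ρ κ) (hΦ : IsL2Prod Φ) :
    ∃ w : E, ∀ t p, (Φ (B t p)).2 = (Φ p).2 + t • w := by
  choose w hw using hB.exists_snd_orbit_eq hΦ
  have hw_const : ∀ p q, w p = w q := fun p q => by
    refine sub_eq_zero.1 (eq_zero_of_forall_norm_add_smul_le (a := (Φ p).2 - (Φ q).2)
      (C := dist p q) fun t => ?_)
    calc ‖(Φ p).2 - (Φ q).2 + t • (w p - w q)‖
        = dist (Φ (B t p)).2 (Φ (B t q)).2 := by
          rw [dist_eq_norm, hw, hw, smul_sub, add_sub_add_comm]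
      _ ≤ dist (B t p) (B t q) := hΦ.dist_snd_le _ _
      _ = dist p q := hB.dist_map_map t p q
  let p₀ := Classical.arbitrary X
  exact ⟨w p₀, fun t p => by rw [hw, hw_const p p₀]⟩

end StrictConvexFactor

section HilbertFactor

variable {X Y H : Type} [MetricSpace X] [MetricSpace Y] [NormedAddCommGroup H]
  [InnerProductSpace ℝ H] {Φ : X → Y × H} {B : ℝ → X → X} {ρ : X → ℝ} {κ : ℝ} {w : H}

theorem dist_fst_sq (hB : IsTranslationFlow B ρ κ) (hΦ : IsL2Prod Φ)
    (hw : ∀ t p, (Φ (B t p)).2 = (Φ p).2 + t • w) (s t : ℝ) (p q : X) :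
    dist (Φ (B s p)).1 (Φ (B t q)).1 ^ 2 = dist (Φ p).1 (Φ q).1 ^ 2
      + 2 * (s - t) * ((ρ p - inner ℝ w (Φ p).2) - (ρ q - inner ℝ w (Φ q).2))
      + (κ - ‖w‖ ^ 2) * (s - t) ^ 2 := by
  have hpyth := hΦ.2 (B s p) (B t q)
  rw [hw, hw, dist_add_smul_add_smul_sq, hB.dist_sq, hΦ.2 p q] at hpyth
  linarith

theorem exists_isTranslationFlow_fst (hB : IsTranslationFlow B ρ κ) (hΦ : IsL2Prod Φ)
    (hw : ∀ t p, (Φ (B t p)).2 = (Φ p).2 + t • w) :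
    ∃ (A : ℝ → Y → Y) (σ : Y → ℝ), IsTranslationFlow A σ (κ - ‖w‖ ^ 2) := by
  choose lift hlift using fun y : Y => hΦ.1.surjective (y, 0)
  have hfst : ∀ y, (Φ (lift y)).1 = y := fun y => by rw [hlift]
  have hcongr : ∀ t p q, (Φ p).1 = (Φ q).1 → (Φ (B t p)).1 = (Φ (B t q)).1 := fun t p q hpq => by
    rw [← dist_eq_zero, ← sq_eq_zero_iff, hB.dist_fst_sq hΦ hw, hpq, dist_self]
    ring
  refine ⟨fun t y => (Φ (B t (lift y))).1, fun y => ρ (lift y) - inner ℝ w (Φ (lift y)).2,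
    fun y => ?_, fun s t y => ?_, fun s t y z => ?_⟩
  · rw [hB.map_zero, hfst]
  · rw [hB.map_add]
    exact hcongr s _ _ (hfst _).symm
  · rw [hB.dist_fst_sq hΦ hw, hfst, hfst]

theorem fst_map_eq (hB : IsTranslationFlow B ρ κ) (hΦ : IsL2Prod Φ)
    (hY : ∀ ℓ : Set Y, ¬ IsSplittingLine ℓ) (t : ℝ) (p : X) : (Φ (B t p)).1 = (Φ p).1 := by
  have : Nonempty X := ⟨p⟩
  have : Nonempty Y := ⟨(Φ p).1⟩
  obtain ⟨w, hw⟩ := hB.exists_snd_map_eq hΦ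
  obtain ⟨A, σ, hA⟩ := hB.exists_isTranslationFlow_fst hΦ hw
  have hspeed : κ - ‖w‖ ^ 2 ≤ 0 := by
    by_contra! hpos
    obtain ⟨ℓ, hℓ⟩ := hA.exists_isSplittingLine hpos
    exact hY ℓ hℓ
  have hmoved := hB.dist_fst_sq hΦ hw t 0 p p
  rw [hB.map_zero, dist_self, sub_self, sub_zero] at hmoved
  rw [← dist_eq_zero, ← sq_eq_zero_iff]
  refine le_antisymm ?_ (sq_nonneg _)
  linarith [mul_nonpos_of_nonpos_of_nonneg hspeed (sq_nonneg t)]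

end HilbertFactor

end IsTranslationFlow

namespace IsL2Prod

variable {X Y H Y' H' : Type} [MetricSpace X] [MetricSpace Y] [NormedAddCommGroup H]
  [InnerProductSpace ℝ H] [MetricSpace Y'] [NormedAddCommGroup H'] [InnerProductSpace ℝ H']
  {Φ : X → Y × H} {Ψ : X → Y' × H'}

theorem exists_isTranslationFlow (hΦ : IsL2Prod Φ) (v : H) :
    ∃ (B : ℝ → X → X) (ρ : X → ℝ), IsTranslationFlow B ρ (‖v‖ ^ 2) ∧
      ∀ t p, Φ (B t p) = ((Φ p).1, (Φ p).2 + t • v) := by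
  choose B hB using fun (t : ℝ) (p : X) => hΦ.1.surjective ((Φ p).1, (Φ p).2 + t • v)
  refine ⟨B, fun p => inner ℝ v (Φ p).2, ⟨fun p => ?_, fun s t p => ?_, fun s t p q => ?_⟩, hB⟩
  · apply hΦ.1.injective
    rw [hB, zero_smul, add_zero]
  · apply hΦ.1.injective
    rw [hB, hB, hB, add_smul, add_comm (s • v), add_assoc]
  · rw [hΦ.2 p q, hΦ.2, hB, hB, dist_add_smul_add_smul_sq]
    ring

theorem fst_eq_of_fst_eq (hΦ : IsL2Prod Φ) (hΨ : IsL2Prod Ψ)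
    (hY' : ∀ ℓ : Set Y', ¬ IsSplittingLine ℓ) {p q : X} (hpq : (Φ p).1 = (Φ q).1) :
    (Ψ p).1 = (Ψ q).1 := by
  obtain ⟨B, ρ, hB, hBΦ⟩ := hΦ.exists_isTranslationFlow ((Φ q).2 - (Φ p).2)
  have hBp : B 1 p = q := hΦ.1.injective <| by
    rw [hBΦ, hpq, one_smul, add_sub_cancel]
  rw [← hBp, hB.fst_map_eq hΨ hY']

end IsL2Prod

theorem isometry_group_splits_general {X Y H Y' H' : Type} [MetricSpace X] [Nonempty X]
    [MetricSpace Y] [NormedAddCommGroup H] [InnerProductSpace ℝ H]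
    [MetricSpace Y'] [NormedAddCommGroup H'] [InnerProductSpace ℝ H']
    {Φ : X → Y × H} {Ψ : X → Y' × H'} (hΦ : IsL2Prod Φ) (hΨ : IsL2Prod Ψ)
    (hY : ∀ ℓ : Set Y, ¬ IsSplittingLine ℓ) (hY' : ∀ ℓ : Set Y', ¬ IsSplittingLine ℓ) :
    ∃ (g : Y ≃ᵢ Y') (h : H ≃ᵢ H'), ∀ p : X, Ψ p = (g (Φ p).1, h (Φ p).2) :=
  hΦ.exists_isometryEquiv_of_fst_eq_iff hΨ fun _ _ =>
    ⟨hΦ.fst_eq_of_fst_eq hΨ hY', hΨ.fst_eq_of_fst_eq hΦ hY⟩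

/-- if `X = Y × H` with `H` a Hilbert space and `Y` without splitting
lines, every isometry of `X` preserves the product structure, so
`Iso(X) ≅ Iso(Y) × Iso(H)`. -/
theorem isometry_group_splits {X Y H : Type} [MetricSpace X] [CompleteSpace X]
    [MetricSpace Y] [NormedAddCommGroup H] [InnerProductSpace ℝ H] [CompleteSpace H]
    (Φ : X → Y × H) (hΦ : IsL2Prod Φ) (hY : ∀ ℓ : Set Y, ¬ IsSplittingLine ℓ)
    (F : X ≃ᵢ X) :
    ∃ (g : Y ≃ᵢ Y) (h : H ≃ᵢ H),
      ∀ p : X, Φ (F p) = (g (Φ p).1, h (Φ p).2) := by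
  rcases isEmpty_or_nonempty X with _ | _
  · exact ⟨.refl Y, .refl H, isEmptyElim⟩
  · exact isometry_group_splits_general hΦ (hΦ.comp_isometryEquiv F) hY hY
end
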